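/- Suppose a C*-algebra A has property min-U for some nonprincipal ultrafilter U on ℕ. Then A is exact. -/

import Mathlib

/-!
The minimal C*-norm is computed by finite matrix compressions.  Call a functional `φ` on `A`
*excisable* if it is approximately implemented by norm-one elements, `e* x e ≈ φ(x) e* e`.  Such
functionals exist and attain the norm of any given positive element: the norm is Lipschitz, hence
differentiable at suitable points of each finite-dimensional subspace (Rademacher), and an element
`e` peaking at such a point turns the partial derivatives into scalars (`exists_excise`,
`exists_excisable`).  For a `φ`-orthonormal tuple `c` the map `x ↦ (φ(c_j* x c_l))` from `A` to
`M_n(ℂ)`, tensored with `id_B`, is dominated by every C*-norm on `A ⊙ B`, since excision makes it an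
honest compression (`norm_amp_le_of_isCStarNorm`).  Conversely the supremum of these compressions
dominates the GNS norm of the product functionals `φ ⊗ ψ` (`exists_spatial_norm`).  Hence the
minimal norm is this supremum (`norm_amp_le`, `minNorm_le`): Takesaki's theorem.

Let `q : B → C` be surjective and `x = ∑ a_i ⊗ b_i`.  It suffices to find `e ∈ ker q` with
`‖∑ a_i ⊗ b_i (1 - e)‖_min` at most about `‖∑ a_i ⊗ q(b_i)‖_min`.  As matrices of bounded size with
bounded coefficients form a compact set, one approximate-unit element `e ∈ ker q` works
simultaneously for all compressions of size at most `d` (`exists_good`).  Now there are two cases.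
If the sizes of approximate systems of matrix units in `A` (`Frame`) are bounded, then so are the
sizes of the compressions of `A`, and one such `e` suffices (`exists_lift_of_not_frame`).  Otherwise
`A` contains approximate matrix units of every size.  If no `e` works, then for every `d` a
compression of the elements `b_i (1 - e_d)` to some `M_k(ℂ)` witnesses a large norm; transplanting it
into `A` along approximate matrix units gives `w_i^d ∈ A` which are dominated by the `q(b_i)` in
matrix combinations of size at most `d` (`exists_upper`), while `∑ a_i ⊗ w_i^d` has a large norm
(`exists_lower`, `exists_witness`).  The elements `w_i = (w_i^d)_U` of `A^U` then satisfy
`‖∑ a_i ⊗ w_i‖_min ≤ ‖∑ a_i ⊗ q(b_i)‖_min` up to a small error in `A^U ⊗_min A^U`, whereas the norms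
`‖∑ a_i ⊗ w_i^d‖_min` stay larger along `U`.  This contradicts property min-`U`
(`exists_lift_of_frame`).
-/

open scoped TensorProduct
open Filter Topology Function

noncomputable section

/-- The star operation on the algebraic tensor product `A ⊗[ℂ] B` of two complex
C*-algebras, determined by `star (a ⊗ b) = star a ⊗ star b`. -/
def tensorStar (A B : Type) [CStarAlgebra A] [CStarAlgebra B] :
    A ⊗[ℂ] B →+ A ⊗[ℂ] B :=
  TensorProduct.liftAddHom
    { toFun := fun a =>
        { toFun := fun b => star a ⊗ₜ[ℂ] star b
          map_zero' := by simp
          map_add' := fun b b' => by simp [star_add, TensorProduct.tmul_add] }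
      map_zero' := by ext b; simp
      map_add' := fun a a' => by ext b; simp [star_add, TensorProduct.add_tmul] }
    (fun c a b => by
      simp [star_smul, TensorProduct.smul_tmul, TensorProduct.tmul_smul])

/-- A C*-norm on the algebraic tensor product `A ⊗[ℂ] B`: a submultiplicative,
star-invariant norm satisfying the C*-identity (so that the completion with respect to it
is a C*-algebra). -/
structure IsCStarNorm {A B : Type} [CStarAlgebra A] [CStarAlgebra B]
    (nu : A ⊗[ℂ] B → ℝ) : Prop where
  eq_zero_iff : ∀ x, nu x = 0 ↔ x = 0
  nonneg : ∀ x, 0 ≤ nu x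
  add_le : ∀ x y, nu (x + y) ≤ nu x + nu y
  smul_eq : ∀ (c : ℂ) x, nu (c • x) = ‖c‖ * nu x
  mul_le : ∀ x y, nu (x * y) ≤ nu x * nu y
  star_eq : ∀ x, nu (tensorStar A B x) = nu x
  cstar : ∀ x, nu (tensorStar A B x * x) = nu x ^ 2

/-- The minimal tensor norm on `A ⊗[ℂ] B`: by Takesaki's theorem, the minimal C*-norm
on the algebraic tensor product. -/
def minNorm (A B : Type) [CStarAlgebra A] [CStarAlgebra B] (x : A ⊗[ℂ] B) : ℝ :=
  sInf {r : ℝ | ∃ nu : A ⊗[ℂ] B → ℝ, IsCStarNorm nu ∧ r = nu x}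

/-- A family of elements of C*-algebras is (uniformly norm-)bounded. -/
def Bdd {I : Type} {A : I → Type} [∀ i, CStarAlgebra (A i)] (f : ∀ i, A i) : Prop :=
  ∃ M : ℝ, ∀ i, ‖f i‖ ≤ M

/-- `π : (∀ i, A i) → B` realizes `B` as the C*-algebra ultraproduct `∏_U A_i`, i.e. as
the quotient of the ℓ∞-product of the `A i` by the ideal of bounded families whose norms
tend to `0` along `U`:  `π` is a unital *-homomorphism on bounded families, every element
of `B` lifts to a bounded family (with control of norms), and the norm of `π f` is the
`U`-limit of the norms `‖f i‖`.  This data determines `B` uniquely up to isometric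
*-isomorphism. -/
structure IsCStarUltraproduct {I : Type} (U : Ultrafilter I) (A : I → Type)
    [∀ i, CStarAlgebra (A i)] (B : Type) [CStarAlgebra B]
    (π : (∀ i, A i) → B) : Prop where
  map_one : π 1 = 1
  map_add : ∀ f g, Bdd f → Bdd g → π (f + g) = π f + π g
  map_mul : ∀ f g, Bdd f → Bdd g → π (f * g) = π f * π g
  map_star : ∀ f, Bdd f → π (star f) = star (π f)
  map_smul : ∀ (c : ℂ) f, Bdd f → π (c • f) = c • π f
  norm_eq : ∀ f, Bdd f → Tendsto (fun i => ‖f i‖) (U : Filter I) (nhds ‖π f‖)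
  surj : ∀ b : B, ∃ f, (∀ i, ‖f i‖ ≤ ‖b‖) ∧ π f = b

/-- `A` has property min-`U`: for every realization of the ultrapower `A^U` and every
ultrapower tensor `Σ_k a^k ⊗ b^k` (presented by bounded families of representatives), the
norm computed in `A^U ⊗_min A^U` agrees with the norm of its natural image in
`(A ⊗_min A)^U`, i.e. the natural *-algebra embedding
`A^U ⊙ A^U → (A ⊗_min A)^U` extends to an isometric embedding
`A^U ⊗_min A^U → (A ⊗_min A)^U`. -/
def HasMinU {I : Type} (U : Ultrafilter I) (A : Type) [CStarAlgebra A] : Prop :=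
  ∀ (B : Type) [CStarAlgebra B] (π : (I → A) → B),
    IsCStarUltraproduct U (fun _ => A) B π →
    ∀ (n : ℕ) (f g : Fin n → I → A), (∀ k, Bdd (f k)) → (∀ k, Bdd (g k)) →
      Tendsto (fun i => minNorm A A (∑ k, f k i ⊗ₜ[ℂ] g k i)) (U : Filter I)
        (nhds (minNorm B B (∑ k, π (f k) ⊗ₜ[ℂ] π (g k))))

/-- `A` is exact: the functor `A ⊗_min (−)` preserves short exact sequences.  Concretely,
for every surjective *-homomorphism `q : B → C` of C*-algebras (so that `C = B/J` with
`J = ker q`) and every `x` in the algebraic tensor product `A ⊙ B`, the minimal tensor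
norm of the image of `x` in `A ⊗_min C` equals the distance (in minimal tensor norm) from
`x` to `A ⊙ J`; that is, `A ⊗_min B/J = (A ⊗_min B)/(A ⊗_min J)`. -/
def IsExact (A : Type) [CStarAlgebra A] : Prop :=
  ∀ (B C : Type) [CStarAlgebra B] [CStarAlgebra C] (q : B →⋆ₐ[ℂ] C), Surjective q →
    ∀ x : A ⊗[ℂ] B,
      minNorm A C (Algebra.TensorProduct.map (AlgHom.id ℂ A) q.toAlgHom x) =
      sInf {r : ℝ |
        ∃ y ∈ Submodule.span ℂ
          {t : A ⊗[ℂ] B | ∃ (a : A) (b : B), q b = 0 ∧ t = a ⊗ₜ[ℂ] b},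
        r = minNorm A B (x - y)}

section Aux

attribute [local instance] CStarAlgebra.spectralOrder CStarAlgebra.spectralOrderedRing

/-! ### Excision -/

/-- A norm-one positive `e` concentrated on the part of the spectrum of `y` above `s`. -/
theorem exists_peak {A : Type} [CStarAlgebra A] [Nontrivial A] {y : A} (hy : 0 ≤ y) {s : ℝ}
    (hs : s < ‖y‖) :
    ∃ e : A, 0 ≤ e ∧ ‖e‖ = 1 ∧ Commute e y ∧ s • (e * e) ≤ e * y * e := by
  have hsa : IsSelfAdjoint y := hy.isSelfAdjoint
  set d := ‖y‖ - s with hd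
  have hdpos : 0 < d := by linarith
  set f : ℝ → ℝ := fun t => max (t - s) 0 / d with hf
  have hfc : Continuous f := by fun_prop
  have hid : cfc (id : ℝ → ℝ) y = y := cfc_id ℝ y
  refine ⟨cfc f y, cfc_nonneg fun t _ => by positivity, le_antisymm ?_ ?_, ?_, ?_⟩
  · refine norm_cfc_le zero_le_one fun t ht => ?_
    have h1 : t ≤ ‖y‖ := (le_abs_self t).trans (spectrum.norm_le_norm_of_mem ht)
    rw [Real.norm_of_nonneg (by positivity), div_le_one hdpos]
    exact max_le (by linarith) hdpos.le
  · have h1 := norm_apply_le_norm_cfc f y (CStarAlgebra.norm_mem_spectrum_of_nonneg hy)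
    have h2 : f ‖y‖ = 1 := by
      simp only [hf, ← hd]
      rw [max_eq_left hdpos.le, div_self hdpos.ne']
    simpa [h2] using h1
  · have h := cfc_commute_cfc f id y
    rwa [hid] at h
  · have h1 : s • (cfc f y * cfc f y) = cfc (fun t => s * (f t * f t)) y := by
      have m1 : cfc (fun t => f t * f t) y = cfc f y * cfc f y :=
        cfc_mul f f y hfc.continuousOn hfc.continuousOn
      rw [← m1]
      exact (cfc_const_mul s (fun t => f t * f t) y (hfc.mul hfc).continuousOn).symm
    have h2 : cfc f y * y * cfc f y = cfc (fun t => f t * t * f t) y := by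
      have m1 : cfc (fun t => f t * t) y = cfc f y * cfc (id : ℝ → ℝ) y :=
        cfc_mul f id y hfc.continuousOn continuousOn_id
      have m2 : cfc (fun t => (f t * t) * f t) y = cfc (fun t => f t * t) y * cfc f y :=
        cfc_mul (fun t => f t * t) f y (hfc.mul continuous_id).continuousOn hfc.continuousOn
      rw [m2, m1, hid]
    rw [h1, h2]
    refine cfc_mono fun t ht => ?_
    rcases le_total t s with h | h
    · simp [hf, max_eq_right (sub_nonpos.2 h)]
    · nlinarith [mul_nonneg (mul_self_nonneg (f t)) (sub_nonneg.2 h)]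

/-- The positive case of `cross_norm`: multiply by elements peaking where `a` and `b` are nearly equal to
their norms. -/
theorem cross_norm_pos {A B D : Type} [CStarAlgebra A] [CStarAlgebra B] [CStarAlgebra D]
    (ι : A →⋆ₙₐ[ℂ] D) (κ : B →⋆ₙₐ[ℂ] D) (hc : ∀ a b, Commute (ι a) (κ b))
    (h0 : ∀ a b, ι a * κ b = 0 → a = 0 ∨ b = 0) {a : A} (ha : 0 ≤ a) {b : B} (hb : 0 ≤ b) :
    ‖a‖ * ‖b‖ ≤ ‖ι a * κ b‖ := by
  rcases eq_or_ne a 0 with rfl | ha0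
  · simp
  rcases eq_or_ne b 0 with rfl | hb0
  · simp
  have : Nontrivial A := nontrivial_of_ne _ _ ha0
  have : Nontrivial B := nontrivial_of_ne _ _ hb0
  have key : ∀ l ∈ Set.Ioo (0 : ℝ) 1, (l * ‖a‖) * (l * ‖b‖) ≤ ‖ι a * κ b‖ := by
    rintro l ⟨hl0, hl1⟩
    obtain ⟨e, he0, he1, hec, hes⟩ := exists_peak ha (s := l * ‖a‖)
      (by nlinarith [norm_pos_iff.2 ha0])
    obtain ⟨f, hf0, hf1, hfc, hfs⟩ := exists_peak hb (s := l * ‖b‖)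
      (by nlinarith [norm_pos_iff.2 hb0])
    have hee : e * a * e = a * (e * e) := by rw [hec.eq, mul_assoc]
    have hff : f * b * f = b * (f * f) := by rw [hfc.eq, mul_assoc]
    rw [hee] at hes
    rw [hff] at hfs
    have pe : 0 ≤ e * e := by simpa [he0.isSelfAdjoint.star_eq] using star_mul_self_nonneg e
    have pf : 0 ≤ f * f := by simpa [hf0.isSelfAdjoint.star_eq] using star_mul_self_nonneg f
    set s := l * ‖a‖
    set t := l * ‖b‖
    have hs : 0 ≤ s := by positivity
    have ht : 0 ≤ t := by positivity
    have hpos : 0 ≤ b * (f * f) := le_trans (smul_nonneg ht pf) hfs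
    have q1 : 0 ≤ ι (a * (e * e) - s • (e * e)) * κ (b * (f * f)) :=
      Commute.mul_nonneg (map_nonneg ι (sub_nonneg.2 hes)) (map_nonneg κ hpos) (hc _ _)
    have q2 : 0 ≤ ι (s • (e * e)) * κ (b * (f * f) - t • (f * f)) :=
      Commute.mul_nonneg (map_nonneg ι (smul_nonneg hs pe)) (map_nonneg κ (sub_nonneg.2 hfs)) (hc _ _)
    have q0 : 0 ≤ ι (s • (e * e)) * κ (t • (f * f)) :=
      Commute.mul_nonneg (map_nonneg ι (smul_nonneg hs pe)) (map_nonneg κ (smul_nonneg ht pf)) (hc _ _)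
    have q3 : ι (s • (e * e)) * κ (t • (f * f)) ≤ ι (a * (e * e)) * κ (b * (f * f)) := by
      rw [← sub_nonneg]
      convert add_nonneg q1 q2 using 1
      simp only [map_sub]
      noncomm_ring
    have q4 := CStarAlgebra.norm_le_norm_of_nonneg_of_le q0 q3
    have e1 : ι (s • (e * e)) * κ (t • (f * f)) = (s * t) • (ι (e * e) * κ (f * f)) := by
      have r1 : ι (s • (e * e)) = s • ι (e * e) := by
        simpa using map_smul ι (s : ℂ) (e * e)
      have r2 : κ (t • (f * f)) = t • κ (f * f) := by
        simpa using map_smul κ (t : ℂ) (f * f)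
      rw [r1, r2, smul_mul_smul_comm]
    have e2 : ι (a * (e * e)) * κ (b * (f * f)) = (ι a * κ b) * (ι (e * e) * κ (f * f)) := by
      rw [map_mul ι a, map_mul κ b, mul_assoc, mul_assoc, ← mul_assoc (ι (e * e)),
        (hc (e * e) b).eq, mul_assoc]
    rw [e1, e2, norm_smul, Real.norm_of_nonneg (by positivity)] at q4
    have q5 := q4.trans (norm_mul_le _ _)
    have hne : 0 < ‖ι (e * e) * κ (f * f)‖ := by
      rw [norm_pos_iff]
      intro hz
      rcases h0 _ _ hz with h | h
      · have : ‖e * e‖ = 1 := by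
          have := CStarRing.norm_star_mul_self (x := e)
          rw [he0.isSelfAdjoint.star_eq] at this
          rw [this, he1, one_mul]
        rw [h] at this; simp at this
      · have : ‖f * f‖ = 1 := by
          have := CStarRing.norm_star_mul_self (x := f)
          rw [hf0.isSelfAdjoint.star_eq] at this
          rw [this, hf1, one_mul]
        rw [h] at this; simp at this
    exact le_of_mul_le_mul_right q5 hne
  have lim : Tendsto (fun l : ℝ => (l * ‖a‖) * (l * ‖b‖)) (𝓝[<] 1) (𝓝 ((1 * ‖a‖) * (1 * ‖b‖))) :=
    (Continuous.tendsto (by fun_prop) 1).mono_left nhdsWithin_le_nhds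
  rw [one_mul, one_mul] at lim
  exact le_of_tendsto lim (eventually_of_mem (Ioo_mem_nhdsLT zero_lt_one) key)

/-- For commuting *-homomorphisms such that `ι a * κ b` vanishes only if `a = 0` or `b = 0`, the norm
dominates the cross norm. -/
theorem cross_norm {A B D : Type} [CStarAlgebra A] [CStarAlgebra B] [CStarAlgebra D]
    (ι : A →⋆ₙₐ[ℂ] D) (κ : B →⋆ₙₐ[ℂ] D) (hc : ∀ a b, Commute (ι a) (κ b))
    (h0 : ∀ a b, ι a * κ b = 0 → a = 0 ∨ b = 0) (a : A) (b : B) :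
    ‖a‖ * ‖b‖ ≤ ‖ι a * κ b‖ := by
  have h1 := cross_norm_pos ι κ hc h0 (a := star a * a) (star_mul_self_nonneg a)
    (star_mul_self_nonneg b)
  have h2 : ι (star a * a) * κ (star b * b) = star (ι a * κ b) * (ι a * κ b) := by
    rw [(hc a b).eq, map_mul, map_mul, map_star, map_star, star_mul]
    have r1 := (hc a (star b)).eq
    have r2 := (hc a b).eq
    rw [map_star] at r1
    simp only [mul_assoc]
    rw [← mul_assoc (ι a), r1, mul_assoc, r2]
  rw [h2, CStarRing.norm_star_mul_self, CStarRing.norm_star_mul_self,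
    CStarRing.norm_star_mul_self] at h1
  exact abs_le_of_sq_le_sq' (by nlinarith) (norm_nonneg _) |>.2

theorem norm_one_add {A : Type} [CStarAlgebra A] [Nontrivial A] {a : A} (ha : 0 ≤ a) :
    1 + ‖a‖ ≤ ‖1 + a‖ := by
  have h1 := CStarAlgebra.norm_mem_spectrum_of_nonneg ha
  have h2 : 1 + ‖a‖ ∈ spectrum ℝ (1 + a) := by
    have := (spectrum.add_mem_add_iff (R := ℝ) (a := a) (r := ‖a‖) (s := 1)).2 h1
    simpa [add_comm] using this
  have := spectrum.norm_le_norm_of_mem h2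
  exact (le_abs_self _).trans this

theorem norm_le_of_sandwich {A : Type} [CStarAlgebra A] {z p : A} (hz : IsSelfAdjoint z)
    (hp : IsSelfAdjoint p) (h1 : z ≤ p) (h2 : -z ≤ p) : ‖z‖ ≤ ‖p‖ := by
  have hp' : p ≤ algebraMap ℝ A ‖p‖ := IsSelfAdjoint.le_algebraMap_norm_self hp
  have h3 := (le_algebraMap_iff_spectrum_le (R := ℝ) hz).1 (h1.trans hp')
  have h4 : algebraMap ℝ A (-‖p‖) ≤ z := by
    rw [map_neg, neg_le]; exact h2.trans hp'
  have h5 := (algebraMap_le_iff_le_spectrum (R := ℝ) hz).1 h4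
  conv_lhs => rw [← cfc_id ℝ z]
  exact norm_cfc_le (norm_nonneg _) fun x hx => abs_le.2 ⟨h5 x hx, h3 x hx⟩

theorem star_sq_norm {A : Type} [CStarAlgebra A] {e : A} (he : 0 ≤ e) (h1 : ‖e‖ = 1) :
    ‖e * e‖ = 1 := by
  have := CStarRing.norm_star_mul_self (x := e)
  rw [he.isSelfAdjoint.star_eq] at this
  rw [this, h1, one_mul]

/-- Finite excision, for selfadjoint elements.  The norm is Lipschitz on the span of the `x i`, hence
differentiable at `1 + a + S c` for some small `c`; for an `e` peaking there, `e * x i * e` is squeezed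
between multiples of `e * e` by the partial derivative of the norm in the direction `x i`. -/
theorem exists_excise_sa {A : Type} [CStarAlgebra A] [Nontrivial A] {ι : Type} [Fintype ι]
    (x : ι → A) (hx : ∀ i, IsSelfAdjoint (x i)) {a : A} (ha : 0 ≤ a) {ε : ℝ} (hε : 0 < ε) :
    ∃ e : A, 0 ≤ e ∧ ‖e‖ = 1 ∧ (∀ i, ∃ l : ℝ, ‖e * x i * e - l • (e * e)‖ ≤ ε) ∧
      ‖e * a * e - ‖a‖ • (e * e)‖ ≤ ε := by
  classical
  set S : (ι → ℝ) → A := fun c => ∑ i, c i • x i with hS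
  have hSc : Continuous S := by fun_prop
  have hS0 : S 0 = 0 := by simp [hS]
  have hSsa : ∀ c, IsSelfAdjoint (S c) := fun c =>
    isSelfAdjoint_sum _ fun i _ => (IsSelfAdjoint.all (c i)).smul (hx i)
  set L : (ι → ℝ) →L[ℝ] A := LinearMap.toContinuousLinearMap
    { toFun := S
      map_add' := fun c d => by simp [hS, add_smul, Finset.sum_add_distrib]
      map_smul' := fun r c => by simp [hS, mul_smul, Finset.smul_sum] } with hL
  have hLS : ∀ c, L c = S c := fun c => rfl
  set N : (ι → ℝ) → ℝ := fun c => ‖1 + a + S c‖ with hN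
  have hlip : LipschitzWith ‖L‖₊ N := by
    refine LipschitzWith.of_dist_le_mul fun c d => ?_
    rw [Real.dist_eq, dist_eq_norm]
    refine (abs_norm_sub_norm_le _ _).trans ?_
    rw [add_sub_add_left_eq_sub, ← hLS, ← hLS, ← map_sub]
    exact L.le_opNorm _
  set δ := min (1 : ℝ) (ε / 4) with hδ
  have hδ0 : 0 < δ := lt_min one_pos (by positivity)
  -- Rademacher: points of differentiability are dense
  obtain ⟨c, hcd, hcs⟩ : ∃ c, DifferentiableAt ℝ N c ∧ ‖S c‖ < δ := by
    have hae := hlip.ae_differentiableAt (μ := MeasureTheory.volume)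
    have hdense := MeasureTheory.Measure.dense_of_ae hae
    have hopen : IsOpen {c | ‖S c‖ < δ} := isOpen_lt (by fun_prop) continuous_const
    obtain ⟨c, h1, h2⟩ := hdense.inter_open_nonempty _ hopen ⟨0, by simpa [hS0]⟩
    exact ⟨c, h2, h1⟩
  set y := 1 + a + S c with hy
  have hy0 : 0 ≤ y := by
    have h1 : -S c ≤ algebraMap ℝ A ‖-S c‖ := IsSelfAdjoint.le_algebraMap_norm_self (hSsa c).neg
    have h2 : algebraMap ℝ A ‖-S c‖ ≤ 1 := by
      rw [Algebra.algebraMap_eq_smul_one, norm_neg]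
      have : ‖S c‖ ≤ 1 := hcs.le.trans (min_le_left _ _)
      calc ‖S c‖ • (1 : A) ≤ (1 : ℝ) • (1 : A) := smul_le_smul_of_nonneg_right this zero_le_one
        _ = 1 := one_smul _ _
    have h3 : 0 ≤ 1 + S c := by
      have := h1.trans h2
      rw [neg_le_iff_add_nonneg] at this
      exact this
    have : y = (1 + S c) + a := by rw [hy]; abel
    rw [this]; exact add_nonneg h3 ha
  set η := ε / 4 with hη
  have hη0 : 0 < η := by positivity
  -- a single step size at which every one-variable difference quotient is within `η`
  obtain ⟨t, ht0, ht1, ht⟩ : ∃ t : ℝ, 0 < t ∧ t ≤ 1 ∧ ∀ i,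
      |N (c + t • Pi.single i 1) - N c - t * fderiv ℝ N c (Pi.single i 1)| ≤ η * t ∧
      |N (c - t • Pi.single i 1) - N c + t * fderiv ℝ N c (Pi.single i 1)| ≤ η * t := by
    have hd0 : ∀ᶠ h : ι → ℝ in 𝓝 0, ‖N (c + h) - N c - fderiv ℝ N c h‖ ≤ η * ‖h‖ :=
      (hasFDerivAt_iff_isLittleO_nhds_zero.1 hcd.hasFDerivAt).def hη0
    have hall : ∀ i, ∀ᶠ t : ℝ in 𝓝[>] 0,
      |N (c + t • Pi.single i 1) - N c - t * fderiv ℝ N c (Pi.single i 1)| ≤ η * t ∧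
      |N (c - t • Pi.single i 1) - N c + t * fderiv ℝ N c (Pi.single i 1)| ≤ η * t := by
      intro i
      have t1 : Tendsto (fun t : ℝ => t • (Pi.single i 1 : ι → ℝ)) (𝓝[>] 0) (𝓝 0) :=
        (Continuous.tendsto' (by fun_prop) _ _ (by simp)).mono_left nhdsWithin_le_nhds
      have t2 : Tendsto (fun t : ℝ => -(t • (Pi.single i 1 : ι → ℝ))) (𝓝[>] 0) (𝓝 0) := by
        simpa using t1.neg
      filter_upwards [t1.eventually hd0, t2.eventually hd0, self_mem_nhdsWithin] with t h1 h2 h3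
      have h3' : (0:ℝ) < t := h3
      have hn : ‖(Pi.single i 1 : ι → ℝ)‖ = 1 := by rw [Pi.norm_single, norm_one]
      rw [norm_smul, hn, map_smul, Real.norm_of_nonneg h3'.le, mul_one, smul_eq_mul, Real.norm_eq_abs] at h1
      rw [norm_neg, norm_smul, hn, map_neg, map_smul, Real.norm_of_nonneg h3'.le, mul_one, smul_eq_mul,
        sub_neg_eq_add, ← sub_eq_add_neg, Real.norm_eq_abs] at h2
      exact ⟨h1, h2⟩
    have h1 : ∀ᶠ t : ℝ in 𝓝[>] 0, t ≤ 1 :=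
      eventually_of_mem (Ioc_mem_nhdsGT zero_lt_one) fun t ht => ht.2
    obtain ⟨t, h2, h3, h4⟩ := ((eventually_all.2 hall).and (h1.and self_mem_nhdsWithin)).exists
    exact ⟨t, h4, h3, h2⟩
  obtain ⟨e, he0, he1, -, hes⟩ := exists_peak hy0 (s := ‖y‖ - η * t) (by nlinarith)
  have hee : 0 ≤ e * e := by simpa [he0.isSelfAdjoint.star_eq] using star_mul_self_nonneg e
  have hee1 : ‖e * e‖ = 1 := star_sq_norm he0 he1
  have hconj : ∀ z : A, IsSelfAdjoint z → IsSelfAdjoint (e * z * e) := fun z hz => by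
    simpa [he0.isSelfAdjoint.star_eq] using hz.conjugate e
  have hle : ∀ z : A, IsSelfAdjoint z → e * z * e ≤ ‖z‖ • (e * e) := fun z hz => by
    simpa [he0.isSelfAdjoint.star_eq] using CStarAlgebra.star_left_conjugate_le_norm_smul (a := e) hz
  have hfin : ∀ (z : A) (l r : ℝ), 0 ≤ r → IsSelfAdjoint z → e * z * e ≤ (l + r) • (e * e) →
      (l - r) • (e * e) ≤ e * z * e → ‖e * z * e - l • (e * e)‖ ≤ r := by
    intro z l r hr hz h1 h2
    have := norm_le_of_sandwich (z := e * z * e - l • (e * e)) (p := r • (e * e))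
      ((hconj z hz).sub ((IsSelfAdjoint.all l).smul hee.isSelfAdjoint))
      ((IsSelfAdjoint.all r).smul hee.isSelfAdjoint)
      (by rw [sub_le_iff_le_add, ← add_smul, add_comm]; exact h1)
      (by rw [neg_sub, sub_le_comm, ← sub_smul]; exact h2)
    rwa [norm_smul, hee1, mul_one, Real.norm_of_nonneg hr] at this
  have hysa : IsSelfAdjoint y := hy0.isSelfAdjoint
  refine ⟨e, he0, he1, fun i => ⟨fderiv ℝ N c (Pi.single i 1), ?_⟩, ?_⟩
  · obtain ⟨hp, hm⟩ := ht i
    set D := fderiv ℝ N c (Pi.single i 1)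
    have hsing : ∀ u : ℝ, 1 + a + S (c + u • Pi.single i 1) = y + u • x i := by
      intro u
      rw [← hLS, map_add, map_smul, hLS, hLS, hy]
      simp [hS, add_assoc]
    have hsm : IsSelfAdjoint (t • x i) := (IsSelfAdjoint.all t).smul (hx i)
    have b1 := hle (y + t • x i) (hysa.add hsm)
    have b2 := hle (y - t • x i) (hysa.sub hsm)
    have n1 : ‖y + t • x i‖ ≤ ‖y‖ + t * D + η * t := by
      have := (abs_le.1 hp).2
      have h := hsing t
      simp only [hN, h] at this
      linarith
    have n2 : ‖y - t • x i‖ ≤ ‖y‖ - t * D + η * t := by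
      have := (abs_le.1 hm).2
      have h := hsing (-t)
      rw [neg_smul, neg_smul, ← sub_eq_add_neg, ← sub_eq_add_neg] at h
      simp only [hN, h] at this
      linarith
    have b1' := b1.trans (smul_le_smul_of_nonneg_right n1 hee)
    have b2' := b2.trans (smul_le_smul_of_nonneg_right n2 hee)
    have r1 : e * (y + t • x i) * e = e * y * e + t • (e * x i * e) := by
      simp [mul_add, add_mul]
    have r2 : e * (y - t • x i) * e = e * y * e - t • (e * x i * e) := by
      simp [mul_sub, sub_mul]
    rw [r1] at b1'
    rw [r2] at b2'
    refine (hfin (x i) D (2 * η) (by positivity) (hx i) ?_ ?_).trans (by linarith)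
    · rw [← smul_le_smul_iff_of_pos_left ht0, smul_smul]
      have := sub_le_sub b1' hes
      rw [add_sub_cancel_left, ← sub_smul] at this
      convert this using 2
      ring
    · rw [← smul_le_smul_iff_of_pos_left ht0, smul_smul]
      have := sub_le_sub hes b2'
      rw [sub_sub_cancel, ← sub_smul] at this
      convert this using 2
      ring
  · have hn : 1 + ‖a‖ - δ ≤ ‖y‖ := by
      have h1 := norm_one_add ha
      have h2 := norm_sub_le (y) (S c)
      rw [hy, add_sub_cancel_right] at h2
      rw [hy]
      linarith
    have hδε : δ ≤ η := min_le_right _ _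
    refine hfin a ‖a‖ ε hε.le ha.isSelfAdjoint ?_ ?_
    · exact (hle a ha.isSelfAdjoint).trans (smul_le_smul_of_nonneg_right (by linarith) hee)
    · have r1 : e * y * e = e * e + e * a * e + e * S c * e := by
        rw [hy]; noncomm_ring
      have h1 := (hle (S c) (hSsa c)).trans (smul_le_smul_of_nonneg_right hcs.le hee)
      rw [r1] at hes
      have r2 : (‖y‖ - η * t) • (e * e) - (e * e + δ • (e * e)) =
          (‖y‖ - η * t - 1 - δ) • (e * e) := by
        simp only [sub_smul, one_smul]; abel
      have r3 : e * e + e * a * e + e * S c * e - (e * e + e * S c * e) = e * a * e := by abel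
      have h3 : (‖y‖ - η * t) • (e * e) - (e * e + δ • (e * e)) ≤ e * a * e := by
        rw [← r3]
        exact sub_le_sub hes (by gcongr)
      rw [r2] at h3
      refine le_trans (smul_le_smul_of_nonneg_right ?_ hee) h3
      nlinarith

/-- Finite excision: finitely many elements act almost as scalars under a common positive norm-one
`e`, and the scalar of a prescribed positive `a` is `‖a‖`. -/
theorem exists_excise {A : Type} [CStarAlgebra A] [Nontrivial A] (F : Finset A) {a : A}
    (ha : 0 ≤ a) {ε : ℝ} (hε : 0 < ε) :
    ∃ e : A, ‖e‖ = 1 ∧ (∀ x ∈ F, ∃ l : ℂ, ‖star e * x * e - l • (star e * e)‖ ≤ ε) ∧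
      ‖star e * a * e - (‖a‖ : ℂ) • (star e * e)‖ ≤ ε := by
  obtain ⟨e, he0, he1, h1, h2⟩ := exists_excise_sa
    (x := fun i : F ⊕ F => Sum.elim (fun x : F => (realPart x.1 : A))
      (fun x : F => (imaginaryPart x.1 : A)) i)
    (by rintro (i | i)
        · exact (realPart i.1).2
        · exact (imaginaryPart i.1).2) ha (half_pos hε)
  refine ⟨e, he1, fun x hx => ?_, ?_⟩
  · obtain ⟨l, hl⟩ := h1 (Sum.inl ⟨x, hx⟩)
    obtain ⟨k, hk⟩ := h1 (Sum.inr ⟨x, hx⟩)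
    simp only [Sum.elim_inl, Sum.elim_inr] at hl hk
    refine ⟨(l : ℂ) + Complex.I * (k : ℂ), ?_⟩
    rw [he0.isSelfAdjoint.star_eq]
    have hx := realPart_add_I_smul_imaginaryPart x
    have : e * x * e - ((l : ℂ) + Complex.I * (k : ℂ)) • (e * e) =
        (e * (realPart x : A) * e - l • (e * e)) +
        Complex.I • (e * (imaginaryPart x : A) * e - k • (e * e)) := by
      conv_lhs => rw [← hx]
      rw [← Complex.coe_smul l, ← Complex.coe_smul k]
      simp only [mul_add, add_mul, smul_sub, add_smul, mul_smul, mul_smul_comm, smul_mul_assoc]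
      abel
    rw [this]
    refine (norm_add_le _ _).trans ?_
    rw [norm_smul, Complex.norm_I, one_mul]
    linarith
  · rw [he0.isSelfAdjoint.star_eq, Complex.coe_smul]
    linarith

/-! ### Excisable functionals -/

/-- A functional is *excisable* if on every finite set it is approximately implemented by
compression to a norm-one element: `e* a e ≈ φ(a) e* e`. -/
def Excisable {A : Type} [CStarAlgebra A] (φ : A →ₗ[ℂ] ℂ) : Prop :=
  ∀ (F : Finset A) (ε : ℝ), 0 < ε →
    ∃ e : A, ‖e‖ = 1 ∧ ∀ a ∈ F, ‖star e * a * e - φ a • (star e * e)‖ ≤ ε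

theorem norm_conj_le {A : Type} [CStarAlgebra A] {e : A} (he : ‖e‖ = 1) (a : A) :
    ‖star e * a * e‖ ≤ ‖a‖ := by
  calc ‖star e * a * e‖ ≤ ‖star e‖ * ‖a‖ * ‖e‖ := norm_mul₃_le
    _ = ‖a‖ := by rw [norm_star, he]; ring

theorem norm_smul_star_mul {A : Type} [CStarAlgebra A] {e : A} (he : ‖e‖ = 1) (z : ℂ) :
    ‖z • (star e * e)‖ = ‖z‖ := by
  rw [norm_smul, CStarRing.norm_star_mul_self, he, one_mul, mul_one]

/-- An ultrafilter limit of the excision scalars, over finite sets and tolerances, is an excisable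
functional attaining the norm of `a`. -/
theorem exists_excisable {A : Type} [CStarAlgebra A] [Nontrivial A] {a : A} (ha : 0 ≤ a) :
    ∃ φ : A →ₗ[ℂ] ℂ, Excisable φ ∧ φ a = ‖a‖ := by
  classical
  have hpos : ∀ n : ℕ, (0 : ℝ) < 1 / (n + 1) := fun n => Nat.one_div_pos_of_nat
  have key : ∀ p : Finset A × ℕ, ∃ (e : A) (l : A → ℂ), ‖e‖ = 1 ∧
      (∀ x ∈ p.1, ‖star e * x * e - l x • (star e * e)‖ ≤ 1 / (p.2 + 1)) ∧
      ‖star e * a * e - (‖a‖ : ℂ) • (star e * e)‖ ≤ 1 / (p.2 + 1) := by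
    intro p
    obtain ⟨e, he, h1, h2⟩ := exists_excise p.1 ha (hpos p.2)
    choose! l hl using h1
    exact ⟨e, l, he, hl, h2⟩
  choose e l he hl hla using key
  -- eventual statements along the directed set of pairs
  obtain ⟨W, hW⟩ : ∃ W : Ultrafilter (Finset A × ℕ), (W : Filter (Finset A × ℕ)) ≤ atTop :=
    ⟨Ultrafilter.of atTop, Ultrafilter.of_le _⟩
  have hmem : ∀ x : A, ∀ᶠ p in (W : Filter (Finset A × ℕ)), x ∈ p.1 := fun x =>
    hW (eventually_atTop.2 ⟨({x}, 0), fun p hp => hp.1 (by simp)⟩)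
  have hsm : Tendsto (fun p : Finset A × ℕ => (1 : ℝ) / (p.2 + 1)) W (𝓝 0) := by
    have h1 : Tendsto (fun p : Finset A × ℕ => p.2) W atTop :=
      tendsto_snd.comp (hW.trans_eq (prod_atTop_atTop_eq).symm)
    exact tendsto_one_div_add_atTop_nhds_zero_nat.comp h1
  have hev : ∀ x : A, ∀ᶠ p in (W : Filter (Finset A × ℕ)),
      ‖star (e p) * x * e p - l p x • (star (e p) * e p)‖ ≤ 1 / (p.2 + 1) := fun x => by
    filter_upwards [hmem x] with p hp using hl p x hp
  have hbd : ∀ x : A, ∀ᶠ p in (W : Filter (Finset A × ℕ)), ‖l p x‖ ≤ ‖x‖ + 1 := fun x => by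
    filter_upwards [hev x] with p hp
    have h1 : (1 : ℝ) / (p.2 + 1) ≤ 1 := by
      rw [div_le_one (by positivity)]; linarith [(Nat.cast_nonneg p.2 : (0 : ℝ) ≤ p.2)]
    have h2 := norm_sub_norm_le (l p x • (star (e p) * e p)) (star (e p) * x * e p)
    rw [norm_sub_rev, norm_smul_star_mul (he p)] at h2
    linarith [norm_conj_le (he p) x]
  have hlim : ∀ x : A, ∃ z : ℂ, Tendsto (fun p => l p x) W (𝓝 z) := fun x => by
    obtain ⟨z, -, hz⟩ := (isCompact_closedBall (0 : ℂ) (‖x‖ + 1)).ultrafilter_le_nhds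
      (W.map fun p => l p x) (by
        rw [le_principal_iff]
        change ∀ᶠ p in (W : Filter (Finset A × ℕ)), l p x ∈ Metric.closedBall (0 : ℂ) (‖x‖ + 1)
        filter_upwards [hbd x] with p hp using by simpa using hp)
    exact ⟨z, hz⟩
  choose φ hφ using hlim
  -- a limit is determined by asymptotic compression
  have huniq : ∀ (x : A) (m : Finset A × ℕ → ℂ) (z : ℂ), Tendsto m W (𝓝 z) →
      Tendsto (fun p => ‖star (e p) * x * e p - m p • (star (e p) * e p)‖) W (𝓝 0) →
      φ x = z := by
    intro x m z hm h0
    have h1 : Tendsto (fun p => ‖l p x - m p‖) W (𝓝 0) := by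
      have h2 : Tendsto (fun p : Finset A × ℕ => (1 : ℝ) / (p.2 + 1) +
          ‖star (e p) * x * e p - m p • (star (e p) * e p)‖) W (𝓝 0) := by
        simpa using hsm.add h0
      refine squeeze_zero' (Eventually.of_forall fun p => norm_nonneg _) ?_ h2
      filter_upwards [hev x] with p hp
      rw [← norm_smul_star_mul (he p)]
      have h3 := norm_sub_le_norm_sub_add_norm_sub (l p x • (star (e p) * e p))
        (star (e p) * x * e p) (m p • (star (e p) * e p))
      rw [← sub_smul, norm_sub_rev] at h3
      linarith
    have h3 := ((hφ x).sub hm).norm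
    have h4 := tendsto_nhds_unique h3 h1
    exact sub_eq_zero.1 (norm_eq_zero.1 h4)
  have hev0 : ∀ x : A, Tendsto (fun p => ‖star (e p) * x * e p - l p x • (star (e p) * e p)‖)
      W (𝓝 0) := fun x =>
    squeeze_zero' (Eventually.of_forall fun p => norm_nonneg _) (hev x) hsm
  refine ⟨{ toFun := φ, map_add' := fun x y => ?_, map_smul' := fun c x => ?_ }, ?_, ?_⟩
  · refine huniq _ (fun p => l p x + l p y) _ ((hφ x).add (hφ y)) ?_
    have h1 : Tendsto _ _ _ := (hev0 x).add (hev0 y)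
    rw [add_zero] at h1
    refine squeeze_zero (fun p => norm_nonneg _) (fun p => ?_) h1
    refine le_trans (le_of_eq ?_) (norm_add_le _ _)
    congr 1
    rw [mul_add, add_mul, add_smul]; abel
  · refine huniq _ (fun p => c * l p x) _ ((hφ x).const_mul c) ?_
    have h1 : Tendsto _ _ _ := (hev0 x).const_mul ‖c‖
    rw [mul_zero] at h1
    refine h1.congr fun p => ?_
    rw [← norm_smul, smul_sub, smul_smul, mul_smul_comm, smul_mul_assoc]
  · intro F ε hε
    have h1 : ∀ᶠ p in (W : Filter (Finset A × ℕ)), ∀ x ∈ F,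
        ‖star (e p) * x * e p - φ x • (star (e p) * e p)‖ < ε := by
      rw [Filter.eventually_all_finset]
      intro x _
      have h2 : Tendsto (fun p => ‖star (e p) * x * e p - l p x • (star (e p) * e p)‖ +
          ‖l p x - φ x‖) W (𝓝 0) := by
        have := ((hφ x).sub_const (φ x)).norm
        rw [sub_self, norm_zero] at this
        simpa using (hev0 x).add this
      filter_upwards [h2.eventually (gt_mem_nhds hε)] with p hp
      refine lt_of_le_of_lt ?_ hp
      rw [← norm_smul_star_mul (he p) (l p x - φ x), sub_smul]
      exact norm_sub_le_norm_sub_add_norm_sub _ _ _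
    obtain ⟨p, hp⟩ := h1.exists
    exact ⟨e p, he p, fun x hx => (hp x hx).le⟩
  · refine huniq a (fun _ => (‖a‖ : ℂ)) _ tendsto_const_nhds ?_
    exact squeeze_zero (fun p => norm_nonneg _) hla hsm

section Props
variable {A : Type} [CStarAlgebra A] {φ : A →ₗ[ℂ] ℂ}

theorem Excisable.norm_le (hφ : Excisable φ) (a : A) : ‖φ a‖ ≤ ‖a‖ := by
  refine le_of_forall_pos_le_add fun ε hε => ?_
  obtain ⟨e, he, h⟩ := hφ {a} ε hε
  have h1 := h a (by simp)
  have h2 := norm_sub_norm_le (φ a • (star e * e)) (star e * a * e)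
  rw [norm_sub_rev, norm_smul_star_mul he] at h2
  linarith [norm_conj_le he a]

theorem Excisable.map_one (hφ : Excisable φ) : φ 1 = 1 := by
  rw [← sub_eq_zero, ← norm_le_zero_iff]
  refine le_of_forall_pos_le_add fun ε hε => ?_
  obtain ⟨e, he, h⟩ := hφ {1} ε hε
  have h1 := h 1 (by simp)
  rw [← norm_smul_star_mul he, sub_smul, one_smul, zero_add, norm_sub_rev]
  simpa using h1

theorem Excisable.map_star (hφ : Excisable φ) (a : A) : φ (star a) = star (φ a) := by
  classical
  rw [← sub_eq_zero, ← norm_le_zero_iff]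
  refine le_of_forall_pos_le_add fun ε hε => ?_
  obtain ⟨e, he, h⟩ := hφ {a, star a} (ε / 2) (half_pos hε)
  have h1 := h a (by simp)
  have h2 := h (star a) (by simp)
  rw [← norm_star] at h1
  simp only [star_sub, star_mul, star_smul, star_star, ← mul_assoc] at h1
  rw [← norm_smul_star_mul he, sub_smul, zero_add]
  have h3 := norm_sub_le_norm_sub_add_norm_sub (φ (star a) • (star e * e)) (star e * star a * e)
    (star (φ a) • (star e * e))
  rw [norm_sub_rev] at h2
  linarith

theorem Excisable.nonneg (hφ : Excisable φ) {a : A} (ha : 0 ≤ a) : 0 ≤ (φ a).re := by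
  have h1 : ‖(‖a‖ : ℂ) - φ a‖ ≤ ‖a‖ := by
    have h2 : (‖a‖ : ℂ) - φ a = φ ((‖a‖ : ℂ) • 1 - a) := by
      rw [map_sub, map_smul, hφ.map_one, smul_eq_mul, mul_one]
    rw [h2]
    refine (hφ.norm_le _).trans ?_
    have h3 : 0 ≤ (‖a‖ : ℂ) • (1 : A) - a := by
      rw [sub_nonneg, Complex.coe_smul, ← Algebra.algebraMap_eq_smul_one]
      exact IsSelfAdjoint.le_algebraMap_norm_self ha.isSelfAdjoint
    have h4 := CStarAlgebra.norm_le_norm_of_nonneg_of_le h3 (sub_le_self _ ha)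
    rw [norm_smul] at h4
    rcases subsingleton_or_nontrivial A with h | h
    · rw [Subsingleton.elim a 0] at h4 ⊢; simp
    · simpa using h4
  have h2 := (Complex.abs_re_le_norm _).trans h1
  have h3 := (abs_le.1 h2).2
  simp at h3
  linarith

theorem Excisable.star_mul_nonneg (hφ : Excisable φ) (a : A) : 0 ≤ (φ (star a * a)).re :=
  hφ.nonneg (star_mul_self_nonneg a)

/-- The positive semidefinite form `⟨a, b⟩ = φ(a* b)`. -/
@[reducible] def Excisable.core (hφ : Excisable φ) : PreInnerProductSpace.Core ℂ A where
  inner a b := φ (star a * b)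
  conj_inner_symm a b := by
    have := hφ.map_star (star b * a)
    rw [star_mul, star_star] at this
    rw [this]; simp
  re_inner_nonneg a := hφ.star_mul_nonneg a
  add_left a b c := by simp [add_mul]
  smul_left a b r := by simp [star_smul]

/-- Gram–Schmidt modulo null vectors: a finite tuple lies, up to null vectors, in the span of a finite
orthonormal tuple. -/
theorem exists_onb {E : Type} [AddCommGroup E] [Module ℂ E] (core : PreInnerProductSpace.Core ℂ E)
    {m : ℕ} (a : Fin m → E) : ∃ (n : ℕ) (c : Fin n → E),
      (∀ j l, core.inner (c j) (c l) = if j = l then 1 else 0) ∧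
      ∀ i, core.inner (a i - ∑ j, core.inner (c j) (a i) • c j)
        (a i - ∑ j, core.inner (c j) (a i) • c j) = 0 := by
  classical
  let : SeminormedAddCommGroup E := @InnerProductSpace.Core.toSeminormedAddCommGroup ℂ E _ _ _ core
  let : InnerProductSpace ℂ E := InnerProductSpace.ofCore core
  let S : Submodule ℂ (SeparationQuotient E) :=
    Submodule.span ℂ (Set.range fun i => SeparationQuotient.mk (a i))
  have : FiniteDimensional ℂ S := FiniteDimensional.span_of_finite ℂ (Set.finite_range _)
  let b := stdOrthonormalBasis ℂ S
  choose c hc using fun j => SeparationQuotient.surjective_mk (b j : SeparationQuotient E)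
  refine ⟨_, c, fun j l => ?_, fun i => ?_⟩
  · change inner ℂ (c j) (c l) = _
    rw [← SeparationQuotient.inner_mk_mk, hc, hc]
    have := orthonormal_iff_ite.1 b.orthonormal j l
    exact this
  · have hmem : SeparationQuotient.mk (a i) ∈ S := Submodule.subset_span ⟨i, rfl⟩
    have h1 := b.sum_repr' ⟨SeparationQuotient.mk (a i), hmem⟩
    have h2 : (SeparationQuotient.mk (a i - ∑ j, core.inner (c j) (a i) • c j) :
        SeparationQuotient E) = 0 := by
      have h3 := congrArg (Subtype.val) h1
      rw [SeparationQuotient.mk_sub, sub_eq_zero]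
      refine h3.symm.trans ?_
      have h4 : ∀ (t : Finset (Fin (Module.finrank ℂ S))) (f : Fin (Module.finrank ℂ S) → E),
          (SeparationQuotient.mk (∑ j ∈ t, f j) : SeparationQuotient E) =
            ∑ j ∈ t, SeparationQuotient.mk (f j) := fun t f => map_sum
              (SeparationQuotient.mkAddMonoidHom (M := E)) f t
      rw [h4, Submodule.coe_sum]
      refine Finset.sum_congr rfl fun j _ => ?_
      rw [SeparationQuotient.mk_smul, hc, Submodule.coe_smul, Submodule.coe_inner]
      congr 1
      conv_lhs => rw [← hc]
      rw [SeparationQuotient.inner_mk_mk]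
    have h3 : ‖a i - ∑ j, core.inner (c j) (a i) • c j‖ = 0 := by
      rw [← SeparationQuotient.norm_mk, h2, norm_zero]
    change inner ℂ (a i - ∑ j, core.inner (c j) (a i) • c j)
      (a i - ∑ j, core.inner (c j) (a i) • c j) = 0
    rw [inner_self_eq_norm_sq_to_K, h3]; simp

/-- Cauchy–Schwarz: a null vector is orthogonal to everything. -/
theorem Excisable.null_right (hφ : Excisable φ) {r : A} (hr : φ (star r * r) = 0) (z : A) :
    φ (star z * r) = 0 := by
  have h := @InnerProductSpace.Core.inner_mul_inner_self_le ℂ A _ _ _ hφ.core z r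
  change ‖φ (star z * r)‖ * ‖φ (star r * z)‖ ≤ (φ (star z * z)).re * (φ (star r * r)).re at h
  have h2 : φ (star r * z) = star (φ (star z * r)) := by
    rw [← hφ.map_star, star_mul, star_star]
  rw [hr, h2, norm_star, Complex.zero_re, mul_zero] at h
  exact norm_eq_zero.1 (mul_self_eq_zero.1 (le_antisymm h (mul_self_nonneg _)))

end Props

/-! ### Completions of C*-seminorms -/

/-- A C*-seminorm on a unital *-algebra is realized by a *-homomorphism with dense range into a
C*-algebra, the completion. -/
theorem exists_completion {R : Type} [iR : Ring R] [StarRing R] [Algebra ℂ R] [StarModule ℂ R]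
    (p : R → ℝ) (hadd : ∀ x y, p (x + y) ≤ p x + p y)
    (hsmul : ∀ (c : ℂ) x, p (c • x) = ‖c‖ * p x) (hmul : ∀ x y, p (x * y) ≤ p x * p y)
    (hstar : ∀ x, p (star x) = p x) (hcs : ∀ x, p (star x * x) = p x ^ 2) :
    ∃ (D : Type) (_ : CStarAlgebra D) (ρ : R →⋆ₐ[ℂ] D), (∀ x, ‖ρ x‖ = p x) ∧ DenseRange ρ := by
  let s : AddGroupSeminorm R :=
    { toFun := p
      map_zero' := by simpa using hsmul 0 0
      add_le' := hadd
      neg' := fun x => by simpa using hsmul (-1) x }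
  let i0 : SeminormedAddCommGroup R := s.toSeminormedAddCommGroup
  let i1 : SeminormedRing R := { iR, i0 with norm_mul_le := hmul }
  have hn : ∀ x : R, ‖x‖ = p x := fun x => rfl
  let i2 : NormedSpace ℂ R := { norm_smul_le := fun c x => (hsmul c x).le }
  let D := UniformSpace.Completion R
  have hsi : Isometry (star : R → R) := AddMonoidHomClass.isometry_of_norm (starAddEquiv (R := R)) hstar
  have hsu : UniformContinuous (star : R → R) := hsi.uniformContinuous
  let st : D → D := UniformSpace.Completion.map star
  have hst : ∀ x : R, st (x : D) = ((star x : R) : D) := fun x => UniformSpace.Completion.map_coe hsu x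
  have hstc : Continuous st := UniformSpace.Completion.continuous_map
  have hcst : ∀ x : D, ‖x‖ * ‖x‖ ≤ ‖st x * x‖ := fun x => by
    induction x using UniformSpace.Completion.induction_on with
    | hp =>
      exact isClosed_le (continuous_norm.mul continuous_norm)
        (continuous_norm.comp (hstc.mul continuous_id))
    | ih x =>
      rw [hst, ← UniformSpace.Completion.coe_mul, UniformSpace.Completion.norm_coe,
        UniformSpace.Completion.norm_coe, hn, hn, hcs, sq]
  have hssm : ∀ (c : ℂ) (x : D), st (c • x) = star c • st x := fun c x => by
    induction x using UniformSpace.Completion.induction_on with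
    | hp => exact isClosed_eq (hstc.comp (continuous_const_smul c)) ((continuous_const_smul (star c)).comp hstc)
    | ih x =>
      rw [← UniformSpace.Completion.coe_smul, hst, hst, ← UniformSpace.Completion.coe_smul,
        star_smul]
  let i3 : StarRing D :=
    { star := st
      star_involutive := fun x => by
        induction x using UniformSpace.Completion.induction_on with
        | hp => exact isClosed_eq (hstc.comp hstc) continuous_id
        | ih x => rw [hst, hst, star_star]
      star_mul := fun x y => by
        induction x, y using UniformSpace.Completion.induction_on₂ with
        | hp => exact isClosed_eq (hstc.comp (by fun_prop)) ((hstc.comp continuous_snd).mul (hstc.comp continuous_fst))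
        | ih x y =>
          change st _ = st _ * st _
          rw [← UniformSpace.Completion.coe_mul, hst, hst, hst, ← UniformSpace.Completion.coe_mul, star_mul]
      star_add := fun x y => by
        induction x, y using UniformSpace.Completion.induction_on₂ with
        | hp => exact isClosed_eq (hstc.comp (by fun_prop)) ((hstc.comp continuous_fst).add (hstc.comp continuous_snd))
        | ih x y =>
          change st _ = st _ + st _
          rw [← UniformSpace.Completion.coe_add, hst, hst, hst, ← UniformSpace.Completion.coe_add, star_add] }
  have hcomm : ∀ (c : ℂ) (x : D), ((algebraMap ℂ R c : R) : D) * x =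
      x * ((algebraMap ℂ R c : R) : D) := fun c x => by
    induction x using UniformSpace.Completion.induction_on with
    | hp => exact isClosed_eq (continuous_const.mul continuous_id) (continuous_id.mul continuous_const)
    | ih x =>
      rw [← UniformSpace.Completion.coe_mul, ← UniformSpace.Completion.coe_mul, Algebra.commutes]
  have hsd : ∀ (c : ℂ) (x : D), c • x = ((algebraMap ℂ R c : R) : D) * x := fun c x => by
    induction x using UniformSpace.Completion.induction_on with
    | hp => exact isClosed_eq (continuous_const_smul c) (continuous_const.mul continuous_id)
    | ih x =>
      rw [← UniformSpace.Completion.coe_mul, ← UniformSpace.Completion.coe_smul, Algebra.smul_def]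
  let i4 : NormedAlgebra ℂ D :=
    { (inferInstance : NormedSpace ℂ D) with
      algebraMap := UniformSpace.Completion.coeRingHom.comp (algebraMap ℂ R)
      commutes' := hcomm
      smul_def' := hsd }
  have i5 : CStarRing D := { norm_mul_self_le := hcst }
  have i6 : StarModule ℂ D := { star_smul := hssm }
  refine ⟨D, { }, { toFun := fun x => (x : D), map_one' := rfl, map_mul' := fun x y => UniformSpace.Completion.coe_mul x y, map_zero' := rfl, map_add' := fun x y => UniformSpace.Completion.coe_add x y, commutes' := fun c => rfl, map_star' := fun x => (hst x).symm }, fun x => UniformSpace.Completion.norm_coe x, UniformSpace.Completion.denseRange_coe⟩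

/-! ### Matrices over C*-algebras -/

/-- The C*-algebra of `n × n` matrices over `A`. -/
abbrev Mat (n : ℕ) (A : Type) : Type := CStarMatrix (Fin n) (Fin n) A

@[simp] theorem Mat.of_entry {A : Type} {n : ℕ} (f : Fin n → Fin n → A) (i j : Fin n) :
    (CStarMatrix.ofMatrix f : Mat n A) i j = f i j := rfl

section Mat
variable {A B D : Type} [CStarAlgebra A] [CStarAlgebra B] [CStarAlgebra D] {n : ℕ}

open CStarMatrix WithCStarModule in
theorem Mat.norm_le_sum (M : Mat n A) : ‖M‖ ≤ ∑ j, ∑ i, ‖M i j‖ := by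
  rw [norm_def]
  refine (toCLM M).opNorm_le_bound (by positivity) fun v => ?_
  simp only [toCLM_apply_eq_sum, Finset.sum_mul]
  apply pi_norm_le_sum_norm _ |>.trans
  gcongr with i _
  change ‖∑ k, v k * M k i‖ ≤ _
  apply norm_sum_le _ _ |>.trans
  gcongr with j _
  apply norm_mul_le _ _ |>.trans
  rw [mul_comm]
  gcongr
  exact norm_apply_le_norm v j

theorem Mat.eq_zero_of_zero (M : Mat 0 A) : M = 0 := CStarMatrix.ext fun i => i.elim0

theorem Mat.norm_le_of_entry (M : Mat n A) {ε : ℝ} (h : ∀ i j, ‖M i j‖ ≤ ε) :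
    ‖M‖ ≤ n ^ 2 * ε := by
  refine (Mat.norm_le_sum M).trans ?_
  calc ∑ j, ∑ i, ‖M i j‖ ≤ ∑ _j : Fin n, ∑ _i : Fin n, ε := by gcongr; exact h _ _
    _ = n ^ 2 * ε := by simp; ring

/-- The diagonal embedding `A → M_n(A)`. -/
def Mat.diag (n : ℕ) (A : Type) [CStarAlgebra A] : A →⋆ₙₐ[ℂ] Mat n A where
  toFun a := CStarMatrix.ofMatrix fun i j => if i = j then a else 0
  map_smul' c a := by
    ext i j; by_cases h : i = j <;> simp [h]
  map_zero' := by ext i j; simp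
  map_add' a b := by ext i j; by_cases h : i = j <;> simp [h]
  map_mul' a b := by
    ext i j; simp [CStarMatrix.mul_apply]
  map_star' a := by
    ext i j
    by_cases h : i = j <;> simp [h, CStarMatrix.star_apply, eq_comm]

theorem Mat.diag_apply (a : A) (i j : Fin n) :
    Mat.diag n A a i j = if i = j then a else 0 := rfl

theorem Mat.norm_diag_le (a : A) : ‖Mat.diag n A a‖ ≤ ‖a‖ := NonUnitalStarAlgHom.norm_apply_le _ a

/-- Entrywise application of a *-homomorphism. -/
def Mat.map (n : ℕ) (f : A →⋆ₙₐ[ℂ] B) : Mat n A →⋆ₙₐ[ℂ] Mat n B := CStarMatrix.mapₙₐ f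

theorem Mat.map_apply (f : A →⋆ₙₐ[ℂ] B) (M : Mat n A) (i j) : Mat.map n f M i j = f (M i j) := rfl

theorem Mat.norm_map_le (f : A →⋆ₙₐ[ℂ] B) (M : Mat n A) : ‖Mat.map n f M‖ ≤ ‖M‖ :=
  NonUnitalStarAlgHom.norm_apply_le _ M

/-- Compression of `X` by a row of elements. -/
theorem Mat.norm_compress_le (X : D) (v : Fin n → D) :
    ‖(CStarMatrix.ofMatrix fun j l => star (v j) * X * v l : Mat n D)‖ ≤
      ‖X‖ * ‖(CStarMatrix.ofMatrix fun j l => star (v j) * v l : Mat n D)‖ := by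
  rcases n with _ | n
  · rw [Mat.eq_zero_of_zero (CStarMatrix.ofMatrix fun j l => star (v j) * X * v l), norm_zero]
    positivity
  · let V : Mat (n + 1) D := CStarMatrix.ofMatrix fun i l => if i = 0 then v l else 0
    have h1 : (CStarMatrix.ofMatrix fun j l => star (v j) * v l : Mat (n + 1) D) = star V * V := by
      ext j l
      simp [V, CStarMatrix.mul_apply, CStarMatrix.star_apply, apply_ite star, ite_mul]
    have h2 : (CStarMatrix.ofMatrix fun j l => star (v j) * X * v l : Mat (n + 1) D) =
        star V * Mat.diag (n + 1) D X * V := by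
      ext j l
      simp [V, CStarMatrix.mul_apply, CStarMatrix.star_apply, apply_ite star, ite_mul,
        Mat.diag_apply]
    rw [h1, h2, CStarRing.norm_star_mul_self]
    calc _ ≤ ‖star V‖ * ‖Mat.diag (n + 1) D X‖ * ‖V‖ := norm_mul₃_le
      _ ≤ ‖V‖ * ‖X‖ * ‖V‖ := by rw [norm_star]; gcongr; exact Mat.norm_diag_le X
      _ = _ := by ring

/-- A matrix entrywise close to `diag(h, …, h)` has norm at most about `‖h‖`. -/
theorem Mat.norm_near_diag (M : Mat n D) (h : D) {ε : ℝ}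
    (hM : ∀ i j, ‖M i j - if i = j then h else 0‖ ≤ ε) : ‖M‖ ≤ ‖h‖ + n ^ 2 * ε := by
  have h1 := Mat.norm_le_of_entry (M - Mat.diag n D h) (ε := ε) fun i j => by
    rw [CStarMatrix.sub_apply, Mat.diag_apply]; exact hM i j
  have h2 := norm_add_le (M - Mat.diag n D h) (Mat.diag n D h)
  rw [sub_add_cancel] at h2
  linarith [Mat.norm_diag_le (n := n) h]

theorem Mat.norm_near (M N : Mat n D) {ε : ℝ} (hM : ∀ i j, ‖M i j - N i j‖ ≤ ε) :
    ‖N‖ ≤ ‖M‖ + n ^ 2 * ε := by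
  have h1 := Mat.norm_le_of_entry (N - M) (ε := ε) fun i j => by
    rw [CStarMatrix.sub_apply, norm_sub_rev]; exact hM i j
  have h2 := norm_add_le (N - M) M
  rw [sub_add_cancel] at h2
  linarith

/-- Matrix form of the cross-norm inequality. -/
theorem Mat.cross_norm (ι : A →⋆ₙₐ[ℂ] D) (κ : B →⋆ₙₐ[ℂ] D) (hc : ∀ a b, Commute (ι a) (κ b))
    (h0 : ∀ a b, ι a * κ b = 0 → a = 0 ∨ b = 0) (a : A) (Y : Mat n B) :
    ‖a‖ * ‖Y‖ ≤ ‖(CStarMatrix.ofMatrix fun j l => ι a * κ (Y j l) : Mat n D)‖ := by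
  have key : ∀ a (Y : Mat n B), (Mat.diag n D).comp ι a * Mat.map n κ Y =
      CStarMatrix.ofMatrix fun j l => ι a * κ (Y j l) := fun a Y => by
    ext j l
    simp [CStarMatrix.mul_apply, Mat.diag_apply, Mat.map_apply]
  rw [← key]
  refine _root_.cross_norm ((Mat.diag n D).comp ι) (Mat.map n κ) (fun a Y => ?_) (fun a Y h => ?_) a Y
  · rw [commute_iff_eq, key]
    ext j l
    simp [CStarMatrix.mul_apply, Mat.diag_apply, Mat.map_apply, (hc _ _).eq]
  · rw [key] at h
    by_contra! hne
    obtain ⟨j, l, hjl⟩ : ∃ j l, Y j l ≠ 0 := by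
      by_contra! h'
      exact hne.2 (CStarMatrix.ext h')
    have := congrFun (congrFun h j) l
    rcases h0 _ _ this with h | h
    · exact hne.1 h
    · exact hjl h

/-- If the compression of `X` by an almost orthogonal row is close to `ι(h') ⊗ Y` with `‖h'‖ = 1`,
then the norm of `Y` is essentially at most that of `X`. -/
theorem norm_le_of_compress (ι : A →⋆ₙₐ[ℂ] D) (κ : B →⋆ₙₐ[ℂ] D)
    (hc : ∀ a b, Commute (ι a) (κ b)) (h0 : ∀ a b, ι a * κ b = 0 → a = 0 ∨ b = 0)
    (X : D) (v : Fin n → D) (h : D) (hh : ‖h‖ ≤ 1) {ε η : ℝ}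
    (hv : ∀ j l, ‖star (v j) * v l - if j = l then h else 0‖ ≤ ε)
    (h' : A) (hh' : ‖h'‖ = 1) (Y : Mat n B)
    (hX : ∀ j l, ‖star (v j) * X * v l - ι h' * κ (Y j l)‖ ≤ η) :
    ‖Y‖ ≤ (1 + n ^ 2 * ε) * ‖X‖ + n ^ 2 * η := by
  have h1 := Mat.cross_norm ι κ hc h0 h' Y
  rw [hh', one_mul] at h1
  have h2 := Mat.norm_near (CStarMatrix.ofMatrix fun j l => star (v j) * X * v l)
    (CStarMatrix.ofMatrix fun j l => ι h' * κ (Y j l)) hX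
  have h3 := Mat.norm_compress_le X v
  have h4 := Mat.norm_near_diag (CStarMatrix.ofMatrix fun j l => star (v j) * v l) h hv
  have h5 : ‖X‖ * ‖(CStarMatrix.ofMatrix fun j l => star (v j) * v l : Mat n D)‖ ≤
      ‖X‖ * (1 + n ^ 2 * ε) := mul_le_mul_of_nonneg_left (by linarith) (norm_nonneg _)
  linarith

end Mat

/-! ### C*-norms dominate compressions -/

theorem le_of_forall_pos_mul {a b K : ℝ} (h : ∀ ε : ℝ, 0 < ε → a ≤ b + ε * K) : a ≤ b := by
  have h1 : Tendsto (fun ε : ℝ => b + ε * K) (𝓝[>] 0) (𝓝 (b + 0 * K)) :=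
    ((continuous_const.add (continuous_id.mul continuous_const)).tendsto 0).mono_left
      nhdsWithin_le_nhds
  rw [zero_mul, add_zero] at h1
  exact ge_of_tendsto h1 (by filter_upwards [self_mem_nhdsWithin] with ε hε using h ε hε)

section Model
variable {A B : Type} [CStarAlgebra A] [CStarAlgebra B]

theorem exists_sum_tmul (x : A ⊗[ℂ] B) :
    ∃ (m : ℕ) (a : Fin m → A) (b : Fin m → B), x = ∑ i, a i ⊗ₜ[ℂ] b i := by
  obtain ⟨S, hS⟩ := TensorProduct.exists_finset x
  refine ⟨S.card, fun i => (S.equivFin.symm i).1.1, fun i => (S.equivFin.symm i).1.2, ?_⟩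
  rw [hS, ← Finset.sum_coe_sort]
  exact (S.equivFin.symm.sum_comp fun p => p.1.1 ⊗ₜ[ℂ] p.1.2).symm

theorem tensorStar_eq (x : A ⊗[ℂ] B) : tensorStar A B x = star x := by
  induction x with
  | zero => simp
  | add x y hx hy => rw [map_add, hx, hy, star_add]
  | tmul a b => rfl

/-- A C*-norm on the algebraic tensor product is realized by commuting representations of the
two factors in a C*-algebra. -/
theorem IsCStarNorm.exists_model {ν : A ⊗[ℂ] B → ℝ} (hν : IsCStarNorm ν) :
    ∃ (D : Type) (_ : CStarAlgebra D) (ι : A →⋆ₐ[ℂ] D) (κ : B →⋆ₐ[ℂ] D),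
      (∀ a b, Commute (ι a) (κ b)) ∧ (∀ a b, ι a * κ b = 0 → a = 0 ∨ b = 0) ∧
      ∀ (m : ℕ) (a : Fin m → A) (b : Fin m → B),
        ‖∑ i, ι (a i) * κ (b i)‖ = ν (∑ i, a i ⊗ₜ[ℂ] b i) := by
  obtain ⟨D, iD, ρ, hρ, -⟩ := exists_completion ν hν.add_le hν.smul_eq hν.mul_le
    (fun x => by rw [← tensorStar_eq]; exact hν.star_eq x)
    (fun x => by rw [← tensorStar_eq]; exact hν.cstar x)
  let ι : A →⋆ₐ[ℂ] D := ρ.comp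
    { (Algebra.TensorProduct.includeLeft : A →ₐ[ℂ] A ⊗[ℂ] B) with
      map_star' := fun a => by
        change star a ⊗ₜ[ℂ] (1 : B) = star a ⊗ₜ[ℂ] star (1 : B)
        rw [star_one] }
  let κ : B →⋆ₐ[ℂ] D := ρ.comp
    { (Algebra.TensorProduct.includeRight : B →ₐ[ℂ] A ⊗[ℂ] B) with
      map_star' := fun b => by
        change (1 : A) ⊗ₜ[ℂ] star b = star (1 : A) ⊗ₜ[ℂ] star b
        rw [star_one] }
  have hικ : ∀ a b, ι a * κ b = ρ (a ⊗ₜ b) := fun a b => by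
    change ρ (a ⊗ₜ 1) * ρ (1 ⊗ₜ b) = _
    rw [← map_mul]; simp
  have hκι : ∀ a b, κ b * ι a = ρ (a ⊗ₜ b) := fun a b => by
    change ρ (1 ⊗ₜ b) * ρ (a ⊗ₜ 1) = _
    rw [← map_mul]; simp
  refine ⟨D, iD, ι, κ, fun a b => by rw [commute_iff_eq, hικ, hκι], fun a b h => ?_,
    fun m a b => ?_⟩
  · rw [hικ] at h
    have h1 := hρ (a ⊗ₜ b)
    rw [h, norm_zero] at h1
    have h2 := (hν.eq_zero_iff _).1 h1.symm
    by_contra! hne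
    obtain ⟨f, hf⟩ := SeparatingDual.exists_ne_zero (R := ℂ) hne.1
    have h3 := congrArg
      ((TensorProduct.lid ℂ B).toLinearMap ∘ₗ LinearMap.rTensor B f.toLinearMap) h2
    have h4 : f a • b = 0 := by simpa using h3
    exact (smul_eq_zero.1 h4).elim hf hne.2
  · simp only [hικ]
    rw [← map_sum, hρ]

end Model

section Slice
variable {A B C : Type} [CStarAlgebra A] [CStarAlgebra B] [CStarAlgebra C]

/-- The slice map `f ⊗ id : A ⊙ B → B`. -/
def sl (f : A →ₗ[ℂ] ℂ) : A ⊗[ℂ] B →ₗ[ℂ] B :=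
  (TensorProduct.lid ℂ B).toLinearMap ∘ₗ LinearMap.rTensor B f

@[simp] theorem sl_tmul (f : A →ₗ[ℂ] ℂ) (a : A) (b : B) : sl f (a ⊗ₜ[ℂ] b) = f a • b := by
  simp [sl]

/-- The functional `a ↦ φ(c* a d)`. -/
def cpr (φ : A →ₗ[ℂ] ℂ) (c d : A) : A →ₗ[ℂ] ℂ :=
  φ ∘ₗ LinearMap.mulLeft ℂ (star c) ∘ₗ LinearMap.mulRight ℂ d

@[simp] theorem cpr_apply (φ : A →ₗ[ℂ] ℂ) (c d a : A) : cpr φ c d a = φ (star c * (a * d)) := rfl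

/-- The image of `x ∈ A ⊙ B` under `T ⊗ id`, where `T : A → M_n(ℂ)` is the compression of the GNS
representation of `φ` to the span of the vectors `c j`. -/
def amp {n : ℕ} (φ : A →ₗ[ℂ] ℂ) (c : Fin n → A) (x : A ⊗[ℂ] B) : Mat n B :=
  CStarMatrix.ofMatrix fun j l => sl (cpr φ (c j) (c l)) x

theorem amp_entry {n : ℕ} (φ : A →ₗ[ℂ] ℂ) (c : Fin n → A) (x : A ⊗[ℂ] B) (j l) :
    amp φ c x j l = sl (cpr φ (c j) (c l)) x := rfl

theorem amp_sum {n m : ℕ} (φ : A →ₗ[ℂ] ℂ) (c : Fin n → A) (a : Fin m → A) (b : Fin m → B) :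
    amp φ c (∑ i, a i ⊗ₜ[ℂ] b i) =
      CStarMatrix.ofMatrix fun j l => ∑ i, φ (star (c j) * (a i * c l)) • b i := by
  ext j l
  simp [amp_entry]

/-- Orthonormality with respect to the sesquilinear form `φ(a* b)`. -/
def ON {n : ℕ} (φ : A →ₗ[ℂ] ℂ) (c : Fin n → A) : Prop :=
  ∀ j l, φ (star (c j) * c l) = if j = l then 1 else 0

/-- Excision turns the compression by an orthonormal tuple into an honest compression, so every
C*-norm dominates the compressed matrices. -/
theorem norm_amp_le_of_isCStarNorm {ν : A ⊗[ℂ] B → ℝ} (hν : IsCStarNorm ν) {φ : A →ₗ[ℂ] ℂ}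
    (hφ : Excisable φ) {n : ℕ} {c : Fin n → A} (hc : ON φ c) (x : A ⊗[ℂ] B) :
    ‖amp φ c x‖ ≤ ν x := by
  classical
  obtain ⟨D, iD, ι, κ, hcm, h0, hn⟩ := hν.exists_model
  obtain ⟨m, a, b, rfl⟩ := exists_sum_tmul x
  have hιn : ∀ a, ‖ι a‖ ≤ ‖a‖ := fun a => NonUnitalStarAlgHom.norm_apply_le ι a
  have hκn : ∀ b, ‖κ b‖ ≤ ‖b‖ := fun a => NonUnitalStarAlgHom.norm_apply_le κ a
  rw [← hn]
  refine le_of_forall_pos_mul (K := n ^ 2 * ‖∑ i, ι (a i) * κ (b i)‖ + n ^ 2 * ∑ i, ‖b i‖)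
    fun ε hε => ?_
  obtain ⟨e, he, hF⟩ := hφ (Finset.univ.image (fun p : Fin n × Fin n => star (c p.1) * c p.2) ∪
    Finset.univ.image (fun p : Fin n × Fin m × Fin n => star (c p.1) * (a p.2.1 * c p.2.2))) ε hε
  have hF1 : ∀ j l, ‖star e * (star (c j) * c l) * e - (if j = l then (1 : ℂ) else 0) •
      (star e * e)‖ ≤ ε := fun j l => by
    rw [← hc j l]
    exact hF _ (Finset.mem_union_left _ (Finset.mem_image_of_mem
      (fun p : Fin n × Fin n => star (c p.1) * c p.2) (Finset.mem_univ (j, l))))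
  have hF2 : ∀ j i l, ‖star e * (star (c j) * (a i * c l)) * e -
      φ (star (c j) * (a i * c l)) • (star e * e)‖ ≤ ε := fun j i l =>
    hF _ (Finset.mem_union_right _ (Finset.mem_image_of_mem
      (fun p : Fin n × Fin m × Fin n => star (c p.1) * (a p.2.1 * c p.2.2))
      (Finset.mem_univ (j, i, l))))
  have hee : ‖star e * e‖ = 1 := by rw [CStarRing.norm_star_mul_self, he, one_mul]
  have := norm_le_of_compress (ι : A →⋆ₙₐ[ℂ] D) (κ : B →⋆ₙₐ[ℂ] D) hcm h0
    (∑ i, ι (a i) * κ (b i)) (fun j => ι (c j * e)) (ι (star e * e)) ((hιn _).trans hee.le)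
    (ε := ε) (η := ε * ∑ i, ‖b i‖) (fun j l => ?_) (star e * e) hee
    (amp φ c (∑ i, a i ⊗ₜ[ℂ] b i)) (fun j l => ?_)
  · refine this.trans (le_of_eq (by ring))
  · have h1 : star (ι (c j * e)) * ι (c l * e) - (if j = l then ι (star e * e) else 0) =
        ι (star e * (star (c j) * c l) * e - (if j = l then (1 : ℂ) else 0) • (star e * e)) := by
      rw [map_sub, ← map_star, ← map_mul]
      congr 1
      · simp only [star_mul, mul_assoc]
      · split_ifs <;> simp
    rw [h1]
    exact (hιn _).trans (hF1 j l)
  · have h1 : star (ι (c j * e)) * (∑ i, ι (a i) * κ (b i)) * ι (c l * e) -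
        ι (star e * e) * κ (amp φ c (∑ i, a i ⊗ₜ[ℂ] b i) j l) =
        ∑ i, ι (star e * (star (c j) * (a i * c l)) * e -
          φ (star (c j) * (a i * c l)) • (star e * e)) * κ (b i) := by
      rw [amp_sum, Mat.of_entry, map_sum, Finset.mul_sum, Finset.sum_mul, Finset.mul_sum,
        ← Finset.sum_sub_distrib]
      refine Finset.sum_congr rfl fun i _ => ?_
      rw [map_sub, sub_mul, map_smul, map_smul, smul_mul_assoc, mul_smul_comm]
      congr 1
      rw [mul_assoc, mul_assoc, ← (hcm (c l * e) (b i)).eq, ← mul_assoc, ← mul_assoc, ← map_star,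
        ← map_mul, ← map_mul]
      simp only [star_mul, mul_assoc]
    refine (le_of_eq (congrArg norm h1)).trans ((norm_sum_le _ _).trans ?_)
    rw [Finset.mul_sum]
    refine Finset.sum_le_sum fun i _ => (norm_mul_le _ _).trans ?_
    exact mul_le_mul ((hιn _).trans (hF2 j i l)) (hκn _) (norm_nonneg _) hε.le

end Slice

/-! ### The GNS norm of a family of functionals -/

/-- The inequality `(M V)* (M V) ≤ ‖M‖² V* V`, with the difference written as a square so that it can
be read off entrywise in matrix algebras. -/
theorem exists_norm_sq_smul_sub {D : Type} [CStarAlgebra D] (M V : D) :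
    ∃ T : D, ‖M‖ ^ 2 • (star V * V) - star (M * V) * (M * V) = star T * T := by
  have h1 := sub_nonneg.2 (CStarAlgebra.star_left_conjugate_le_norm_smul (a := V)
    (IsSelfAdjoint.star_mul_self M))
  obtain ⟨T, hT⟩ := CStarAlgebra.nonneg_iff_eq_star_mul_self.1 h1
  have h5 : star V * (star M * M) * V = star (M * V) * (M * V) := by
    rw [star_mul]; simp only [mul_assoc]
  rw [h5, CStarRing.norm_star_mul_self, ← sq] at hT
  exact ⟨T, hT⟩

/-- A matrix acts on columns with norm at most `‖M‖`, in the sense of `B`-valued inner products. -/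
theorem Mat.col_ineq {B : Type} [CStarAlgebra B] {n : ℕ} (M : Mat n B) (d : Fin n → B) :
    0 ≤ ‖M‖ ^ 2 • (∑ l, star (d l) * d l) -
      ∑ j, star (∑ l, M j l * d l) * ∑ l, M j l * d l := by
  rcases n with _ | n
  · simp
  let V : Mat (n + 1) B := CStarMatrix.ofMatrix fun i l => if l = 0 then d i else 0
  obtain ⟨T, hT⟩ := exists_norm_sq_smul_sub M V
  have h2 := congrFun (congrFun hT 0) 0
  have h3 : (star T * T) 0 0 = ∑ k, star (T k 0) * T k 0 := by
    simp [CStarMatrix.mul_apply, CStarMatrix.star_apply]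
  have h4 : (star V * V) 0 0 = ∑ l, star (d l) * d l := by
    simp [V, CStarMatrix.mul_apply, CStarMatrix.star_apply]
  have h6 : (star (M * V) * (M * V)) 0 0 =
      ∑ j, star (∑ l, M j l * d l) * ∑ l, M j l * d l := by
    simp [V, CStarMatrix.mul_apply, CStarMatrix.star_apply]
  rw [h3] at h2
  have h7 : (‖M‖ ^ 2 • (star V * V) - star (M * V) * (M * V)) 0 0 =
      ‖M‖ ^ 2 • (star V * V) 0 0 - (star (M * V) * (M * V)) 0 0 := rfl
  rw [← h4, ← h6, ← h7]
  refine le_of_le_of_eq (Finset.sum_nonneg fun k _ => star_mul_self_nonneg (T k 0)) h2.symm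

section GNS
variable {R : Type} [Ring R] [StarRing R] [Algebra ℂ R] [StarModule ℂ R]

/-- The semi-inner product of a positive functional. -/
@[reducible] def gnsCore (ω : R →ₗ[ℂ] ℂ) (hs : ∀ x, ω (star x) = star (ω x))
    (hp : ∀ x, 0 ≤ (ω (star x * x)).re) : PreInnerProductSpace.Core ℂ R where
  inner a b := ω (star a * b)
  conj_inner_symm a b := by
    have := hs (star b * a)
    rw [star_mul, star_star] at this
    rw [this]; simp
  re_inner_nonneg a := hp a
  add_left a b c := by simp [add_mul]
  smul_left a b r := by simp [star_smul]

/-- Cauchy–Schwarz for a positive functional. -/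
theorem gns_cs (ω : R →ₗ[ℂ] ℂ) (hs : ∀ x, ω (star x) = star (ω x))
    (hp : ∀ x, 0 ≤ (ω (star x * x)).re) (x y : R) :
    ‖ω (star x * y)‖ ≤ √(ω (star x * x)).re * √(ω (star y * y)).re := by
  have h := @InnerProductSpace.Core.inner_mul_inner_self_le ℂ R _ _ _ (gnsCore ω hs hp) x y
  change ‖ω (star x * y)‖ * ‖ω (star y * x)‖ ≤ (ω (star x * x)).re * (ω (star y * y)).re at h
  have h2 : ω (star y * x) = star (ω (star x * y)) := by
    rw [← hs, star_mul, star_star]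
  rw [h2, norm_star, ← sq] at h
  rw [← Real.sqrt_mul (hp x)]
  exact Real.le_sqrt_of_sq_le h

/-- Minkowski's inequality for a positive functional. -/
theorem gns_add (ω : R →ₗ[ℂ] ℂ) (hs : ∀ x, ω (star x) = star (ω x))
    (hp : ∀ x, 0 ≤ (ω (star x * x)).re) (x y : R) :
    √(ω (star (x + y) * (x + y))).re ≤ √(ω (star x * x)).re + √(ω (star y * y)).re := by
  refine Real.sqrt_le_iff.2 ⟨by positivity, ?_⟩
  have h1 : (ω (star (x + y) * (x + y))).re = (ω (star x * x)).re + (ω (star y * y)).re +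
      ((ω (star x * y)).re + (ω (star y * x)).re) := by
    rw [star_add, add_mul, mul_add, mul_add]
    simp only [map_add, Complex.add_re]; ring
  have h2 := (Complex.re_le_norm _).trans (gns_cs ω hs hp x y)
  have h3 := (Complex.re_le_norm _).trans (gns_cs ω hs hp y x)
  have h4 := Real.sq_sqrt (hp x)
  have h5 := Real.sq_sqrt (hp y)
  nlinarith

/-- A uniformly bounded family of positive functionals defines a C*-seminorm, namely the supremum
of the operator norms of left multiplication on the associated pre-Hilbert spaces. -/
theorem exists_gns_norm (Ω : Set (R →ₗ[ℂ] ℂ))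
    (hs : ∀ ω ∈ Ω, ∀ x, ω (star x) = star (ω x))
    (hp : ∀ ω ∈ Ω, ∀ x, 0 ≤ (ω (star x * x)).re)
    (hb : ∀ x, ∃ r : ℝ, 0 ≤ r ∧ ∀ ω ∈ Ω, ∀ y,
      √(ω (star (x * y) * (x * y))).re ≤ r * √(ω (star y * y)).re) :
    ∃ ν : R → ℝ, (∀ x, 0 ≤ ν x) ∧ (∀ x y, ν (x + y) ≤ ν x + ν y) ∧
      (∀ (c : ℂ) x, ν (c • x) = ‖c‖ * ν x) ∧ (∀ x y, ν (x * y) ≤ ν x * ν y) ∧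
      (∀ x, ν (star x) = ν x) ∧ (∀ x, ν (star x * x) = ν x ^ 2) ∧
      (∀ x, ∀ ω ∈ Ω, ∀ y, √(ω (star (x * y) * (x * y))).re ≤ ν x * √(ω (star y * y)).re) ∧
      ∀ x r, 0 ≤ r → (∀ ω ∈ Ω, ∀ y,
        √(ω (star (x * y) * (x * y))).re ≤ r * √(ω (star y * y)).re) → ν x ≤ r := by
  let S : R → Set ℝ := fun x => {r | 0 ≤ r ∧ ∀ ω ∈ Ω, ∀ y,
      √(ω (star (x * y) * (x * y))).re ≤ r * √(ω (star y * y)).re}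
  have hbdd : ∀ x, BddBelow (S x) := fun x => ⟨0, fun r hr => hr.1⟩
  have hcl : ∀ x, IsClosed (S x) := fun x => by
    have : S x = Set.Ici 0 ∩ ⋂ ω ∈ Ω, ⋂ y, {r : ℝ |
        √(ω (star (x * y) * (x * y))).re ≤ r * √(ω (star y * y)).re} := by
      ext r; simp [S]
    rw [this]
    refine isClosed_Ici.inter (isClosed_biInter fun ω _ => isClosed_iInter fun y => ?_)
    exact isClosed_le continuous_const (continuous_id.mul continuous_const)
  have hmem : ∀ x, sInf (S x) ∈ S x := fun x => (hcl x).csInf_mem (hb x) (hbdd x)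
  have hle : ∀ x r, r ∈ S x → sInf (S x) ≤ r := fun x r hr => csInf_le (hbdd x) hr
  have hsm : ∀ (c : ℂ) x, sInf (S (c • x)) ≤ ‖c‖ * sInf (S x) := fun c x => by
    refine hle _ _ ⟨mul_nonneg (norm_nonneg _) (hmem x).1, fun ω hω y => ?_⟩
    have h1 : ω (star (c • x * y) * (c • x * y)) =
        ((‖c‖ ^ 2 : ℝ) : ℂ) * ω (star (x * y) * (x * y)) := by
      rw [smul_mul_assoc, star_smul, smul_mul_assoc, mul_smul_comm, smul_smul, map_smul,
        smul_eq_mul]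
      congr 1
      have := Complex.conj_mul' c
      rw [← Complex.ofReal_pow] at this
      exact this
    rw [h1, Complex.re_ofReal_mul, Real.sqrt_mul (by positivity), Real.sqrt_sq (norm_nonneg _),
      mul_assoc]
    exact mul_le_mul_of_nonneg_left ((hmem x).2 ω hω y) (norm_nonneg _)
  have hmul : ∀ x y, sInf (S (x * y)) ≤ sInf (S x) * sInf (S y) := fun x y => by
    refine hle _ _ ⟨mul_nonneg (hmem x).1 (hmem y).1, fun ω hω z => ?_⟩
    have h1 := (hmem x).2 ω hω (y * z)
    have h2 := (hmem y).2 ω hω z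
    rw [← mul_assoc x y z] at h1
    refine h1.trans ?_
    rw [mul_assoc]
    exact mul_le_mul_of_nonneg_left h2 (hmem x).1
  have hc1 : ∀ x, sInf (S x) ^ 2 ≤ sInf (S (star x * x)) := fun x => by
    have h0 := (hmem (star x * x)).1
    rw [← Real.le_sqrt (hmem x).1 h0]
    refine hle _ _ ⟨Real.sqrt_nonneg _, fun ω hω y => ?_⟩
    rw [← Real.sqrt_sq (Real.sqrt_nonneg (ω (star y * y)).re), ← Real.sqrt_mul h0]
    refine Real.sqrt_le_sqrt ?_
    have h1 : star (x * y) * (x * y) = star y * (star x * x * y) := by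
      rw [star_mul]; simp only [mul_assoc]
    rw [h1]
    refine (Complex.re_le_norm _).trans ((gns_cs ω (hs ω hω) (hp ω hω) _ _).trans ?_)
    have h2 := (hmem (star x * x)).2 ω hω y
    have h3 := Real.sqrt_nonneg (ω (star y * y)).re
    nlinarith
  have hst : ∀ x, sInf (S x) ≤ sInf (S (star x)) := fun x => by
    have h1 := (hc1 x).trans (hmul (star x) x)
    rcases (hmem x).1.eq_or_lt with h | h
    · rw [← h]; exact (hmem _).1
    · exact le_of_mul_le_mul_right (by rwa [← sq]) h
  have hst' : ∀ x, sInf (S (star x)) = sInf (S x) := fun x =>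
    le_antisymm (by simpa using hst (star x)) (hst x)
  refine ⟨fun x => sInf (S x), fun x => (hmem x).1, fun x y => ?_, fun c x => ?_, hmul, hst',
    fun x => ?_, fun x => (hmem x).2, fun x r hr h => hle x r ⟨hr, h⟩⟩
  · refine hle _ _ ⟨add_nonneg (hmem x).1 (hmem y).1, fun ω hω z => ?_⟩
    rw [add_mul, add_mul]
    exact (gns_add ω (hs ω hω) (hp ω hω) _ _).trans
      (add_le_add ((hmem x).2 ω hω z) ((hmem y).2 ω hω z))
  · refine le_antisymm (hsm c x) ?_
    by_cases hc : c = 0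
    · simp only [hc, norm_zero, zero_mul]
      exact (hmem _).1
    · have h1 := hsm c⁻¹ (c • x)
      rw [smul_smul, inv_mul_cancel₀ hc, one_smul, norm_inv] at h1
      have h2 : 0 < ‖c‖ := norm_pos_iff.2 hc
      calc ‖c‖ * sInf (S x) ≤ ‖c‖ * (‖c‖⁻¹ * sInf (S (c • x))) := by gcongr
        _ = sInf (S (c • x)) := by field_simp
  · refine le_antisymm ((hmul _ _).trans (le_of_eq ?_)) (hc1 x)
    rw [hst', sq]

end GNS

/-! ### The spatial norm and the minimal norm -/

section Spatial
variable {A B : Type} [CStarAlgebra A] [CStarAlgebra B]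

/-- The product functional `φ ⊗ ψ`. -/
def prodF (φ : A →ₗ[ℂ] ℂ) (ψ : B →ₗ[ℂ] ℂ) : A ⊗[ℂ] B →ₗ[ℂ] ℂ := ψ ∘ₗ sl φ

@[simp] theorem prodF_tmul (φ : A →ₗ[ℂ] ℂ) (ψ : B →ₗ[ℂ] ℂ) (a : A) (b : B) :
    prodF φ ψ (a ⊗ₜ[ℂ] b) = φ a * ψ b := by simp [prodF]

/-- The functional `a ↦ φ(c* a)`. -/
def lft (φ : A →ₗ[ℂ] ℂ) (c : A) : A →ₗ[ℂ] ℂ := φ ∘ₗ LinearMap.mulLeft ℂ (star c)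

@[simp] theorem lft_apply (φ : A →ₗ[ℂ] ℂ) (c a : A) : lft φ c a = φ (star c * a) := rfl

theorem prodF_star_tmul_mul (φ : A →ₗ[ℂ] ℂ) (ψ : B →ₗ[ℂ] ℂ) (a : A) (b : B) (w : A ⊗[ℂ] B) :
    prodF φ ψ (star (a ⊗ₜ[ℂ] b) * w) = ψ (star b * sl (lft φ a) w) := by
  induction w with
  | zero => simp
  | add x y hx hy => simp only [mul_add, map_add, hx, hy]
  | tmul a' b' =>
    rw [TensorProduct.star_tmul, Algebra.TensorProduct.tmul_mul_tmul]
    simp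

variable {φ : A →ₗ[ℂ] ℂ} {ψ : B →ₗ[ℂ] ℂ}

theorem prodF_star (hφ : Excisable φ) (hψ : Excisable ψ) (x : A ⊗[ℂ] B) :
    prodF φ ψ (star x) = star (prodF φ ψ x) := by
  induction x with
  | zero => simp
  | add x y hx hy => simp only [star_add, map_add, hx, hy]
  | tmul a b =>
    rw [TensorProduct.star_tmul, prodF_tmul, prodF_tmul, hφ.map_star, hψ.map_star, star_mul']

/-- `w` lies, up to null vectors of `φ` in its first leg, in the span of the tuple `c`. -/
def Expands {n : ℕ} (φ : A →ₗ[ℂ] ℂ) (c : Fin n → A) (w : A ⊗[ℂ] B) : Prop :=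
  ∀ z : A, sl (lft φ z) w = ∑ j, φ (star z * c j) • sl (lft φ (c j)) w

/-- Parseval's identity in the first leg. -/
theorem Expands.parseval (hφ : Excisable φ) {n : ℕ} {c : Fin n → A} {w : A ⊗[ℂ] B}
    (hw : Expands φ c w) (u : A ⊗[ℂ] B) :
    prodF φ ψ (star u * w) = ∑ j, ψ (star (sl (lft φ (c j)) u) * sl (lft φ (c j)) w) := by
  induction u with
  | zero => simp
  | add x y hx hy =>
    simp only [star_add, add_mul, map_add, hx, hy, Finset.sum_add_distrib]
  | tmul a b =>
    rw [prodF_star_tmul_mul, hw a, Finset.mul_sum, map_sum]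
    refine Finset.sum_congr rfl fun j _ => ?_
    rw [sl_tmul, star_smul, lft_apply, ← hφ.map_star, star_mul, star_star, smul_mul_assoc,
      mul_smul_comm]

theorem expands_sum {n m : ℕ} {c : Fin n → A} {a : Fin m → A} {b : Fin m → B}
    (h : ∀ i z, φ (star z * a i) = ∑ j, φ (star z * c j) * φ (star (c j) * a i)) :
    Expands φ c (∑ i, a i ⊗ₜ[ℂ] b i) := fun z => by
  simp only [map_sum, sl_tmul, lft_apply, Finset.smul_sum, smul_smul]
  rw [Finset.sum_comm]
  refine Finset.sum_congr rfl fun i _ => ?_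
  rw [← Finset.sum_smul, h i z]

/-- Two tensors admit a common orthonormal tuple in the first leg. -/
theorem exists_expands (hφ : Excisable φ) (x y : A ⊗[ℂ] B) :
    ∃ (n : ℕ) (c : Fin n → A), ON φ c ∧ Expands φ c x ∧ Expands φ c y := by
  obtain ⟨m, a, b, rfl⟩ := exists_sum_tmul x
  obtain ⟨m', a', b', rfl⟩ := exists_sum_tmul y
  obtain ⟨n, c, hc, hn⟩ := exists_onb hφ.core (Fin.append a a')
  have key : ∀ i z, φ (star z * Fin.append a a' i) =
      ∑ j, φ (star z * c j) * φ (star (c j) * Fin.append a a' i) := fun i z => by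
    have h1 := hφ.null_right (hn i) z
    rw [mul_sub, map_sub, sub_eq_zero] at h1
    rw [h1, Finset.mul_sum, map_sum]
    refine Finset.sum_congr rfl fun j _ => ?_
    rw [mul_smul_comm, map_smul, smul_eq_mul, mul_comm]
    rfl
  refine ⟨n, c, hc, expands_sum fun i z => ?_, expands_sum fun i z => ?_⟩
  · simpa using key (Fin.castAdd m' i) z
  · simpa using key (Fin.natAdd m i) z

theorem sl_lft_tmul_mul (c a : A) (b : B) (y : A ⊗[ℂ] B) :
    sl (lft φ c) (a ⊗ₜ[ℂ] b * y) = b * sl (lft φ (star a * c)) y := by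
  induction y with
  | zero => simp
  | add x y hx hy => simp only [mul_add, map_add, hx, hy]
  | tmul a' b' =>
    rw [Algebra.TensorProduct.tmul_mul_tmul]
    simp [mul_assoc]

/-- Left multiplication by `x` acts on the coordinates of `y` through the matrix `amp φ c x`. -/
theorem Expands.sl_mul {n : ℕ} {c : Fin n → A} {y : A ⊗[ℂ] B} (hy : Expands φ c y)
    (x : A ⊗[ℂ] B) (j : Fin n) :
    sl (lft φ (c j)) (x * y) = ∑ l, amp φ c x j l * sl (lft φ (c l)) y := by
  induction x with
  | zero => simp [amp_entry]
  | add x x' hx hx' =>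
    simp only [amp_entry] at hx hx'
    simp only [add_mul, map_add, hx, hx', amp_entry, Finset.sum_add_distrib]
  | tmul a b =>
    rw [sl_lft_tmul_mul, hy, Finset.mul_sum]
    refine Finset.sum_congr rfl fun l _ => ?_
    rw [amp_entry, sl_tmul, cpr_apply, star_mul, star_star, mul_smul_comm, smul_mul_assoc,
      mul_assoc]

theorem prodF_nonneg (hφ : Excisable φ) (hψ : Excisable ψ) (x : A ⊗[ℂ] B) :
    0 ≤ (prodF φ ψ (star x * x)).re := by
  obtain ⟨n, c, -, hc, -⟩ := exists_expands hφ x x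
  rw [hc.parseval hφ, Complex.re_sum]
  exact Finset.sum_nonneg fun j _ => hψ.star_mul_nonneg _

/-- In the GNS space of a product functional, left multiplication by `x` is controlled by the
compressions `amp φ c x`. -/
theorem prodF_mul_le (hφ : Excisable φ) (hψ : Excisable ψ) (x : A ⊗[ℂ] B) {r : ℝ} (hr : 0 ≤ r)
    (h : ∀ (n : ℕ) (c : Fin n → A), ON φ c → ‖amp φ c x‖ ≤ r) (y : A ⊗[ℂ] B) :
    √(prodF φ ψ (star (x * y) * (x * y))).re ≤ r * √(prodF φ ψ (star y * y)).re := by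
  obtain ⟨n, c, hc, hy, hxy⟩ := exists_expands hφ y (x * y)
  have h1 := hψ.nonneg (Mat.col_ineq (amp φ c x) fun l => sl (lft φ (c l)) y)
  have h2 : (prodF φ ψ (star (x * y) * (x * y))).re ≤
      ‖amp φ c x‖ ^ 2 * (prodF φ ψ (star y * y)).re := by
    rw [hxy.parseval hφ, hy.parseval hφ, ← map_sum, ← map_sum, ← sub_nonneg]
    rw [map_sub, ← Complex.coe_smul, map_smul, smul_eq_mul, Complex.sub_re,
      Complex.re_ofReal_mul] at h1
    simpa only [hy.sl_mul] using h1
  have h3 : (prodF φ ψ (star (x * y) * (x * y))).re ≤ r ^ 2 * (prodF φ ψ (star y * y)).re :=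
    h2.trans (mul_le_mul_of_nonneg_right (pow_le_pow_left₀ (norm_nonneg _) (h n c hc) 2)
      (prodF_nonneg hφ hψ y))
  refine (Real.sqrt_le_sqrt h3).trans_eq ?_
  rw [Real.sqrt_mul (by positivity), Real.sqrt_sq hr]

theorem exists_star_mul_add {A : Type} [CStarAlgebra A] (a : A) :
    ∃ t : A, star a * a + star t * t = ((‖a‖ ^ 2 : ℝ) : ℂ) • (1 : A) := by
  obtain ⟨t, ht⟩ := exists_norm_sq_smul_sub a 1
  refine ⟨t, ?_⟩
  rw [← ht]
  simp only [star_one, mul_one]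
  rw [add_sub_cancel, Complex.coe_smul]

/-- Left multiplication is bounded, uniformly over all product functionals; this makes the supremum
defining the spatial norm finite. -/
theorem prodF_bdd (x : A ⊗[ℂ] B) : ∃ r : ℝ, 0 ≤ r ∧
    ∀ ω ∈ {ω : A ⊗[ℂ] B →ₗ[ℂ] ℂ | ∃ φ ψ, Excisable φ ∧ Excisable ψ ∧ ω = prodF φ ψ},
      ∀ y, √(ω (star (x * y) * (x * y))).re ≤ r * √(ω (star y * y)).re := by
  have aux : ∀ (u t : A ⊗[ℂ] B) (r : ℝ), 0 ≤ r →
      star u * u + star t * t = ((r ^ 2 : ℝ) : ℂ) • (1 : A ⊗[ℂ] B) →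
      ∀ (φ : A →ₗ[ℂ] ℂ) (ψ : B →ₗ[ℂ] ℂ), Excisable φ → Excisable ψ → ∀ y,
      √(prodF φ ψ (star (u * y) * (u * y))).re ≤ r * √(prodF φ ψ (star y * y)).re := by
    intro u t r hr h φ ψ hφ hψ y
    have h1 : star (u * y) * (u * y) + star (t * y) * (t * y) =
        ((r ^ 2 : ℝ) : ℂ) • (star y * y) := by
      have : star (u * y) * (u * y) + star (t * y) * (t * y) =
          star y * (star u * u + star t * t) * y := by
        simp only [star_mul, mul_add, add_mul, mul_assoc]
      rw [this, h, mul_smul_comm, smul_mul_assoc, mul_one]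
    have h2 := congrArg (fun z => (prodF φ ψ z).re) h1
    simp only [map_add, map_smul, smul_eq_mul, Complex.add_re, Complex.re_ofReal_mul] at h2
    have h3 := prodF_nonneg hφ hψ (t * y)
    refine (Real.sqrt_le_sqrt (show _ ≤ r ^ 2 * (prodF φ ψ (star y * y)).re by
      linarith)).trans_eq ?_
    rw [Real.sqrt_mul (by positivity), Real.sqrt_sq hr]
  induction x with
  | zero => exact ⟨0, le_rfl, by simp⟩
  | add x x' hx hx' =>
    obtain ⟨r, hr, h⟩ := hx
    obtain ⟨r', hr', h'⟩ := hx'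
    refine ⟨r + r', add_nonneg hr hr', ?_⟩
    rintro ω ⟨φ, ψ, hφ, hψ, rfl⟩ y
    rw [add_mul, add_mul]
    exact (gns_add _ (prodF_star hφ hψ) (prodF_nonneg hφ hψ) _ _).trans
      (add_le_add (h _ ⟨φ, ψ, hφ, hψ, rfl⟩ y) (h' _ ⟨φ, ψ, hφ, hψ, rfl⟩ y))
  | tmul a b =>
    refine ⟨‖a‖ * ‖b‖, by positivity, ?_⟩
    rintro ω ⟨φ, ψ, hφ, hψ, rfl⟩ y
    obtain ⟨s, hs⟩ := exists_star_mul_add a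
    obtain ⟨t, ht⟩ := exists_star_mul_add b
    have h1 := aux (a ⊗ₜ 1) (s ⊗ₜ 1) ‖a‖ (norm_nonneg _) (by
      simp only [TensorProduct.star_tmul, Algebra.TensorProduct.tmul_mul_tmul, star_one, mul_one]
      rw [← TensorProduct.add_tmul, hs, ← TensorProduct.smul_tmul', Algebra.TensorProduct.one_def])
      φ ψ hφ hψ ((1 ⊗ₜ b) * y)
    have h2 := aux (1 ⊗ₜ b) (1 ⊗ₜ t) ‖b‖ (norm_nonneg _) (by
      simp only [TensorProduct.star_tmul, Algebra.TensorProduct.tmul_mul_tmul, star_one, mul_one]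
      rw [← TensorProduct.tmul_add, ht, TensorProduct.tmul_smul, Algebra.TensorProduct.one_def])
      φ ψ hφ hψ y
    have h3 : a ⊗ₜ[ℂ] (1 : B) * ((1 : A) ⊗ₜ[ℂ] b * y) = a ⊗ₜ[ℂ] b * y := by
      rw [← mul_assoc, Algebra.TensorProduct.tmul_mul_tmul, mul_one, one_mul]
    rw [h3] at h1
    refine h1.trans ?_
    rw [mul_assoc]
    exact mul_le_mul_of_nonneg_left h2 (norm_nonneg _)

/-- Excisable functionals separate points. -/
theorem Excisable.eq_zero {A : Type} [CStarAlgebra A] {a : A}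
    (h : ∀ φ : A →ₗ[ℂ] ℂ, Excisable φ → φ (star a * a) = 0) : a = 0 := by
  rcases subsingleton_or_nontrivial A with hA | hA
  · exact Subsingleton.elim _ _
  · obtain ⟨φ, hφ, h1⟩ := exists_excisable (star_mul_self_nonneg a)
    rw [h φ hφ, CStarRing.norm_star_mul_self] at h1
    have h2 : ‖a‖ * ‖a‖ = 0 := by exact_mod_cast h1.symm
    exact norm_eq_zero.1 (mul_self_eq_zero.1 h2)

theorem eq_zero_of_slice (x : A ⊗[ℂ] B)
    (h : ∀ f : B →ₗ[ℂ] ℂ, TensorProduct.rid ℂ A (f.lTensor A x) = 0) : x = 0 := by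
  classical
  let 𝒞 := Module.Basis.ofVectorSpace ℂ B
  refine (TensorProduct.equivFinsuppOfBasisRight 𝒞).injective ?_
  ext i
  rw [TensorProduct.equivFinsuppOfBasisRight_apply, h]
  simp

theorem rid_lTensor_sl (f : B →ₗ[ℂ] ℂ) (g : A →ₗ[ℂ] ℂ) (x : A ⊗[ℂ] B) :
    g (TensorProduct.rid ℂ A (f.lTensor A x)) = f (sl g x) := by
  induction x with
  | zero => simp
  | add x y hx hy => simp only [map_add, hx, hy]
  | tmul a b => simp [mul_comm]

/-- The product functionals separate the points of `A ⊙ B`. -/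
theorem eq_zero_of_prodF (x : A ⊗[ℂ] B) (h : ∀ (φ : A →ₗ[ℂ] ℂ) (ψ : B →ₗ[ℂ] ℂ), Excisable φ →
    Excisable ψ → (prodF φ ψ (star x * x)).re = 0) : x = 0 := by
  have h1 : ∀ (φ : A →ₗ[ℂ] ℂ), Excisable φ → ∀ a, sl (lft φ a) x = 0 := fun φ hφ a => by
    refine Excisable.eq_zero fun ψ hψ => ?_
    have h2 := gns_cs _ (prodF_star hφ hψ) (prodF_nonneg hφ hψ) (a ⊗ₜ sl (lft φ a) x) x
    rw [h φ ψ hφ hψ, Real.sqrt_zero, mul_zero, prodF_star_tmul_mul] at h2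
    exact norm_le_zero_iff.1 h2
  refine eq_zero_of_slice x fun f => Excisable.eq_zero fun φ hφ => ?_
  have h2 := rid_lTensor_sl f (lft φ (TensorProduct.rid ℂ A (f.lTensor A x))) x
  rw [h1 φ hφ, map_zero] at h2
  exact h2

variable (A B) in
/-- The spatial norm, computed from products of excisable functionals. -/
theorem exists_spatial_norm : ∃ ν : A ⊗[ℂ] B → ℝ, IsCStarNorm ν ∧ ∀ x r, 0 ≤ r →
    (∀ φ : A →ₗ[ℂ] ℂ, Excisable φ → ∀ (n : ℕ) (c : Fin n → A), ON φ c → ‖amp φ c x‖ ≤ r) →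
    ν x ≤ r := by
  obtain ⟨ν, h0, hadd, hsm, hmul, hst, hcs, hν, hle⟩ := exists_gns_norm
    {ω : A ⊗[ℂ] B →ₗ[ℂ] ℂ | ∃ φ ψ, Excisable φ ∧ Excisable ψ ∧ ω = prodF φ ψ}
    (by rintro ω ⟨φ, ψ, hφ, hψ, rfl⟩; exact prodF_star hφ hψ)
    (by rintro ω ⟨φ, ψ, hφ, hψ, rfl⟩; exact prodF_nonneg hφ hψ) prodF_bdd
  refine ⟨ν, ⟨fun x => ⟨fun hx => ?_, ?_⟩, h0, hadd, hsm, hmul,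
    fun x => by rw [tensorStar_eq, hst], fun x => by rw [tensorStar_eq, hcs]⟩, fun x r hr h => ?_⟩
  · refine eq_zero_of_prodF x fun φ ψ hφ hψ => ?_
    have h1 := hν x _ ⟨φ, ψ, hφ, hψ, rfl⟩ 1
    rw [hx, zero_mul, mul_one] at h1
    exact le_antisymm (Real.sqrt_eq_zero'.1 (le_antisymm h1 (Real.sqrt_nonneg _)))
      (prodF_nonneg hφ hψ x)
  · rintro rfl; simpa using hsm 0 0
  · refine hle x r hr ?_
    rintro ω ⟨φ, ψ, hφ, hψ, rfl⟩ y
    exact prodF_mul_le hφ hψ x hr (h φ hφ) y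

theorem minNorm_le_of_norm {ν : A ⊗[ℂ] B → ℝ} (hν : IsCStarNorm ν) (x : A ⊗[ℂ] B) :
    minNorm A B x ≤ ν x :=
  csInf_le ⟨0, by rintro _ ⟨ν, h, rfl⟩; exact h.nonneg x⟩ ⟨ν, hν, rfl⟩

theorem le_minNorm {x : A ⊗[ℂ] B} {r : ℝ} (h : ∀ ν : A ⊗[ℂ] B → ℝ, IsCStarNorm ν → r ≤ ν x) :
    r ≤ minNorm A B x := by
  obtain ⟨ν, hν, -⟩ := exists_spatial_norm A B
  exact le_csInf ⟨_, ν, hν, rfl⟩ (by rintro _ ⟨ν, hν, rfl⟩; exact h ν hν)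

theorem minNorm_nonneg (x : A ⊗[ℂ] B) : 0 ≤ minNorm A B x := le_minNorm fun _ hν => hν.nonneg x

/-- One half of Takesaki's theorem: compressions are dominated by the minimal norm. -/
theorem norm_amp_le {φ : A →ₗ[ℂ] ℂ} (hφ : Excisable φ) {n : ℕ} {c : Fin n → A} (hc : ON φ c)
    (x : A ⊗[ℂ] B) : ‖amp φ c x‖ ≤ minNorm A B x :=
  le_minNorm fun _ hν => norm_amp_le_of_isCStarNorm hν hφ hc x

/-- The other half of Takesaki's theorem: the minimal norm is the supremum of the compressions. -/
theorem minNorm_le {x : A ⊗[ℂ] B} {r : ℝ} (hr : 0 ≤ r) (h : ∀ φ : A →ₗ[ℂ] ℂ, Excisable φ →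
    ∀ (n : ℕ) (c : Fin n → A), ON φ c → ‖amp φ c x‖ ≤ r) : minNorm A B x ≤ r := by
  obtain ⟨ν, hν, h1⟩ := exists_spatial_norm A B
  exact (minNorm_le_of_norm hν x).trans (h1 x r hr h)

theorem IsCStarNorm.comm {ν : B ⊗[ℂ] A → ℝ} (hν : IsCStarNorm ν) :
    IsCStarNorm fun x : A ⊗[ℂ] B => ν (Algebra.TensorProduct.comm ℂ A B x) := by
  have hs : ∀ x : A ⊗[ℂ] B, Algebra.TensorProduct.comm ℂ A B (tensorStar A B x) =
      tensorStar B A (Algebra.TensorProduct.comm ℂ A B x) := fun x => by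
    rw [tensorStar_eq, tensorStar_eq]
    induction x with
    | zero => simp
    | add x y hx hy => simp only [star_add, map_add, hx, hy]
    | tmul a b => simp [TensorProduct.star_tmul]
  refine ⟨fun x => ?_, fun x => hν.nonneg _, fun x y => ?_, fun c x => ?_, fun x y => ?_,
    fun x => ?_, fun x => ?_⟩
  · rw [hν.eq_zero_iff, map_eq_zero_iff _ (Algebra.TensorProduct.comm ℂ A B).injective]
  · rw [map_add]; exact hν.add_le _ _
  · rw [map_smul]; exact hν.smul_eq _ _
  · rw [map_mul]; exact hν.mul_le _ _
  · rw [hs]; exact hν.star_eq _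
  · rw [map_mul, hs]; exact hν.cstar _

theorem minNorm_comm_le (x : A ⊗[ℂ] B) :
    minNorm A B x ≤ minNorm B A (Algebra.TensorProduct.comm ℂ A B x) :=
  le_minNorm fun _ hν => minNorm_le_of_norm hν.comm x

theorem minNorm_sum_comm {m : ℕ} (a : Fin m → A) (b : Fin m → B) :
    minNorm A B (∑ i, a i ⊗ₜ[ℂ] b i) = minNorm B A (∑ i, b i ⊗ₜ[ℂ] a i) := by
  refine le_antisymm ?_ ?_
  · simpa using minNorm_comm_le (∑ i, a i ⊗ₜ[ℂ] b i)
  · simpa using minNorm_comm_le (∑ i, b i ⊗ₜ[ℂ] a i)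

end Spatial

section Functorial
variable {A B C : Type} [CStarAlgebra A] [CStarAlgebra B] [CStarAlgebra C]

theorem minNorm_map_right_le {m : ℕ} (f : B →⋆ₐ[ℂ] C) (a : Fin m → A) (b : Fin m → B) :
    minNorm A C (∑ i, a i ⊗ₜ[ℂ] f (b i)) ≤ minNorm A B (∑ i, a i ⊗ₜ[ℂ] b i) := by
  refine minNorm_le (minNorm_nonneg _) fun φ hφ n c hc => ?_
  refine le_trans (le_of_eq ?_) ((Mat.norm_map_le (n := n) (f : B →⋆ₙₐ[ℂ] C) _).trans
    (norm_amp_le hφ hc _))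
  congr 1
  ext j l
  simp [Mat.map_apply, amp_entry]

theorem minNorm_map_left_le {m : ℕ} (f : B →⋆ₐ[ℂ] C) (a : Fin m → A) (b : Fin m → B) :
    minNorm C A (∑ i, f (b i) ⊗ₜ[ℂ] a i) ≤ minNorm B A (∑ i, b i ⊗ₜ[ℂ] a i) := by
  rw [minNorm_sum_comm, minNorm_sum_comm b]
  exact minNorm_map_right_le f a b

end Functorial

/-! ### Lifting matrix estimates along quotients -/

section Lift

/-- An element of norm at most `r` in the range of a *-homomorphism has
a preimage of norm at most `r`. -/
theorem exists_norm_le_lift {E F : Type} [CStarAlgebra E] [CStarAlgebra F] (p : E →⋆ₐ[ℂ] F) (y : E)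
    {r : ℝ} (hr : ‖p y‖ ≤ r) : ∃ y', ‖y'‖ ≤ r ∧ p y' = p y := by
  rcases ((norm_nonneg _).trans hr).eq_or_lt with h0 | h0
  · refine ⟨0, by simp [← h0], ?_⟩
    rw [map_zero]
    exact (norm_le_zero_iff.1 (hr.trans h0.symm.le)).symm
  let f : ℝ → ℝ := fun t => r / max r √|t|
  have hm : ∀ t : ℝ, 0 < max r √|t| := fun t => h0.trans_le (le_max_left _ _)
  have hf : Continuous f :=
    continuous_const.div (continuous_const.max (Real.continuous_sqrt.comp continuous_abs))
      fun t => (hm t).ne'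
  have hsa : IsSelfAdjoint (star y * y) := IsSelfAdjoint.star_mul_self y
  have hpc : Continuous p := map_continuous p
  refine ⟨y * cfc f (star y * y), ?_, ?_⟩
  · have h1 : star (y * cfc f (star y * y)) * (y * cfc f (star y * y)) =
        cfc (fun t => f t * (t * f t)) (star y * y) := by
      rw [cfc_mul f (fun t => t * f t) _ hf.continuousOn (continuous_id.mul hf).continuousOn,
        cfc_mul (fun t => t) f _ continuous_id.continuousOn hf.continuousOn, cfc_id' ℝ (star y * y),
        star_mul, (cfc_predicate f (star y * y) : IsSelfAdjoint _).star_eq]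
      simp only [mul_assoc]
    have h2 : ‖cfc (fun t => f t * (t * f t)) (star y * y)‖ ≤ r ^ 2 := by
      refine norm_cfc_le (by positivity) fun t _ => ?_
      have h3 : f t * (t * f t) = r ^ 2 * (t / max r √|t| ^ 2) := by
        simp only [f]; field_simp
      rw [h3, norm_mul, Real.norm_eq_abs, Real.norm_eq_abs, abs_of_nonneg (sq_nonneg r), abs_div,
        abs_of_nonneg (sq_nonneg (max r √|t|))]
      have h4 : |t| ≤ max r √|t| ^ 2 := by
        calc |t| = √|t| ^ 2 := (Real.sq_sqrt (abs_nonneg t)).symm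
          _ ≤ _ := pow_le_pow_left₀ (Real.sqrt_nonneg _) (le_max_right _ _) 2
      have h5 : |t| / max r √|t| ^ 2 ≤ 1 := div_le_one_of_le₀ h4 (by positivity)
      nlinarith [sq_nonneg r]
    rw [← h1, CStarRing.norm_star_mul_self, ← sq] at h2
    exact le_of_sq_le_sq h2 h0.le
  · have h1 : p (cfc f (star y * y)) = cfc f (p (star y * y)) :=
      StarAlgHomClass.map_cfc (S := ℂ) p f (star y * y) hf.continuousOn hpc hsa (hsa.map p)
    have h2 : cfc f (p (star y * y)) = 1 := by
      rw [← cfc_one ℝ (p (star y * y)) (hsa.map p)]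
      refine cfc_congr fun t ht => ?_
      have h3 : ‖t‖ ≤ ‖p (star y * y)‖ * ‖(1 : F)‖ := spectrum.norm_le_norm_mul_of_mem ht
      have h4 : |t| ≤ r ^ 2 := by
        rw [Real.norm_eq_abs] at h3
        rcases subsingleton_or_nontrivial F with hF | hF
        · rw [Subsingleton.elim (1 : F) 0, norm_zero, mul_zero] at h3
          exact h3.trans (sq_nonneg r)
        · rw [CStarRing.norm_one, mul_one, map_mul, map_star, CStarRing.norm_star_mul_self] at h3
          nlinarith [norm_nonneg (p y)]
      have h5 : √|t| ≤ r := Real.sqrt_le_iff.2 ⟨h0.le, h4⟩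
      simp only [f, max_eq_left h5, Pi.one_apply]
      exact div_self h0.ne'
    rw [map_mul, h1, h2, mul_one]

/-- An approximate unit of the kernel of a *-homomorphism, on a finite subset. -/
theorem exists_approx_unit {E F : Type} [CStarAlgebra E] [CStarAlgebra F] (p : E →⋆ₐ[ℂ] F)
    (J : Finset E) (hJ : ∀ j ∈ J, p j = 0) {ε : ℝ} (hε : 0 < ε) :
    ∃ e : E, p e = 0 ∧ ‖1 - e‖ ≤ 1 ∧ ∀ j ∈ J, ‖j * (1 - e)‖ ≤ ε := by
  let h : E := ∑ j ∈ J, star j * j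
  have hsa : IsSelfAdjoint h := isSelfAdjoint_sum _ fun j _ => IsSelfAdjoint.star_mul_self j
  let η : ℝ := ε ^ 2
  have hη : 0 < η := by positivity
  have hd : ∀ t : ℝ, 0 < |t| + η := fun t => add_pos_of_nonneg_of_pos (abs_nonneg t) hη
  let f : ℝ → ℝ := fun t => |t| / (|t| + η)
  let g : ℝ → ℝ := fun t => η / (|t| + η)
  have hf : Continuous f := continuous_abs.div (continuous_abs.add continuous_const)
    fun t => (hd t).ne'
  have hg : Continuous g := continuous_const.div (continuous_abs.add continuous_const)
    fun t => (hd t).ne'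
  have hgn : ∀ t, |g t| ≤ 1 := fun t => by
    rw [abs_of_nonneg (div_nonneg hη.le (hd t).le)]
    exact div_le_one_of_le₀ (by linarith [abs_nonneg t]) (hd t).le
  have hpc : Continuous p := map_continuous p
  have hsub : 1 - cfc f h = cfc g h := by
    rw [← cfc_one ℝ h hsa, ← cfc_sub (1 : ℝ → ℝ) f h continuous_one.continuousOn hf.continuousOn]
    refine cfc_congr fun t _ => ?_
    have := (hd t).ne'
    simp only [f, g, Pi.one_apply]
    field_simp
    ring
  have hgs : IsSelfAdjoint (cfc g h) := cfc_predicate g h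
  refine ⟨cfc f h, ?_, ?_, fun j hj => ?_⟩
  · have h1 : p (cfc f h) = cfc f (p h) :=
      StarAlgHomClass.map_cfc (S := ℂ) p f h hf.continuousOn hpc hsa (hsa.map p)
    have h2 : p h = 0 := by
      rw [map_sum]
      exact Finset.sum_eq_zero fun j hj => by rw [map_mul, hJ j hj, mul_zero]
    rw [h1, h2, cfc_apply_zero]
    simp [f]
  · rw [hsub]
    exact norm_cfc_le zero_le_one fun t _ => hgn t
  · rw [hsub]
    have h1 : star j * j ≤ h := Finset.single_le_sum (f := fun j : E => star j * j)
      (fun i _ => star_mul_self_nonneg i) hj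
    have h2 := star_left_conjugate_le_conjugate h1 (cfc g h)
    have h3 : 0 ≤ star (cfc g h) * (star j * j) * cfc g h :=
      star_left_conjugate_nonneg (star_mul_self_nonneg j) _
    have h4 := CStarAlgebra.norm_le_norm_of_nonneg_of_le h3 h2
    have h5 : star (cfc g h) * (star j * j) * cfc g h = star (j * cfc g h) * (j * cfc g h) := by
      rw [star_mul]; simp only [mul_assoc]
    have h6 : star (cfc g h) * h * cfc g h = cfc (fun t => g t * (t * g t)) h := by
      rw [cfc_mul g (fun t => t * g t) _ hg.continuousOn (continuous_id.mul hg).continuousOn,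
        cfc_mul (fun t => t) g _ continuous_id.continuousOn hg.continuousOn, cfc_id' ℝ h,
        hgs.star_eq, mul_assoc]
    have h7 : ‖cfc (fun t => g t * (t * g t)) h‖ ≤ η := by
      refine norm_cfc_le hη.le fun t _ => ?_
      have h8 : g t * (t * g t) = η * (η * t / (|t| + η) ^ 2) := by
        have := (hd t).ne'
        simp only [g]; field_simp
      rw [h8, norm_mul, Real.norm_eq_abs, Real.norm_eq_abs, abs_of_nonneg hη.le, abs_div, abs_mul,
        abs_of_nonneg hη.le, abs_of_nonneg (sq_nonneg (|t| + η))]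
      have h9 : η * |t| / (|t| + η) ^ 2 ≤ 1 :=
        div_le_one_of_le₀ (by nlinarith [abs_nonneg t]) (by positivity)
      nlinarith
    rw [h5, h6, CStarRing.norm_star_mul_self, ← sq] at h4
    exact le_of_sq_le_sq (h4.trans h7) hε.le

end Lift

section Comb
variable {B C : Type} [CStarAlgebra B] [CStarAlgebra C] {m n : ℕ}

/-- The matrix `∑ i, α i ⊗ b i` in `M_n(B)`. -/
def comb (α : Fin m → Fin n → Fin n → ℂ) (b : Fin m → B) : Mat n B :=
  CStarMatrix.ofMatrix fun j l => ∑ i, α i j l • b i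

theorem comb_entry (α : Fin m → Fin n → Fin n → ℂ) (b : Fin m → B) (j l : Fin n) :
    comb α b j l = ∑ i, α i j l • b i := rfl

/-- Entrywise application of a unital *-homomorphism. -/
def Mat.map1 (n : ℕ) (q : B →⋆ₐ[ℂ] C) : Mat n B →⋆ₐ[ℂ] Mat n C where
  toFun := Mat.map n (q : B →⋆ₙₐ[ℂ] C)
  map_one' := by
    ext i j
    by_cases h : i = j <;> simp [Mat.map_apply, h, CStarMatrix.one_apply]
  map_mul' := map_mul _
  map_zero' := map_zero _
  map_add' := map_add _
  commutes' c := by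
    rw [Algebra.algebraMap_eq_smul_one, Algebra.algebraMap_eq_smul_one, map_smul]
    congr 1
    ext i j
    by_cases h : i = j <;> simp [Mat.map_apply, h, CStarMatrix.one_apply]
  map_star' := map_star _

theorem Mat.map1_apply (q : B →⋆ₐ[ℂ] C) (M : Mat n B) (i j) : Mat.map1 n q M i j = q (M i j) := rfl

theorem comb_map (q : B →⋆ₐ[ℂ] C) (α : Fin m → Fin n → Fin n → ℂ) (b : Fin m → B) :
    Mat.map1 n q (comb α b) = comb α fun i => q (b i) := by
  ext j l
  simp [Mat.map1_apply, comb_entry]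

theorem comb_mul_diag (α : Fin m → Fin n → Fin n → ℂ) (b : Fin m → B) (z : B) :
    (comb α fun i => b i * z) = comb α b * Mat.diag n B z := by
  ext j l
  simp [comb_entry, CStarMatrix.mul_apply, Mat.diag_apply, Finset.sum_mul]

theorem norm_comb_sub_le {α β : Fin m → Fin n → Fin n → ℂ} {ρ : ℝ}
    (h : ∀ i j l, ‖α i j l - β i j l‖ ≤ ρ) (b : Fin m → B) :
    ‖comb α b - comb β b‖ ≤ n ^ 2 * (ρ * ∑ i, ‖b i‖) := by
  refine Mat.norm_le_of_entry _ fun j l => ?_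
  rw [CStarMatrix.sub_apply, comb_entry, comb_entry, ← Finset.sum_sub_distrib, Finset.mul_sum]
  refine norm_sum_le_of_le _ fun i _ => ?_
  rw [← sub_smul, norm_smul]
  exact mul_le_mul_of_nonneg_right (h i j l) (norm_nonneg _)

/-- The coefficient tuples that are good for `(q b_i)` and of fixed size are controlled by finitely
many elements of `ker q`. -/
theorem exists_finset_good (q : B →⋆ₐ[ℂ] C) (b : Fin m → B) (R r : ℝ) {δ ε : ℝ} (hδ : 0 < δ)
    (n : ℕ) (hε : n ^ 2 * ε ≤ δ / 2) :
    ∃ J : Finset B, (∀ j ∈ J, q j = 0) ∧ ∀ e : B, ‖1 - e‖ ≤ 1 →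
      (∀ j ∈ J, ‖j * (1 - e)‖ ≤ ε) → ∀ α : Fin m → Fin n → Fin n → ℂ,
      (∀ i j l, ‖α i j l‖ ≤ R) → ‖comb α fun i => q (b i)‖ ≤ r →
      ‖comb α fun i => b i * (1 - e)‖ ≤ r + δ := by
  classical
  let G : Set (Fin m → Fin n → Fin n → ℂ) :=
    {α | (∀ i j l, ‖α i j l‖ ≤ R) ∧ ‖comb α fun i => q (b i)‖ ≤ r}
  obtain ⟨ρ, hρ, hρδ⟩ : ∃ ρ : ℝ, 0 < ρ ∧ n ^ 2 * (ρ * ∑ i, ‖b i‖) ≤ δ / 2 := by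
    refine ⟨δ / 2 / (n ^ 2 * (∑ i, ‖b i‖) + 1), by positivity, ?_⟩
    rw [div_mul_eq_mul_div, mul_div_assoc', div_le_iff₀ (by positivity)]
    nlinarith
  have hG : TotallyBounded G := by
    refine TotallyBounded.subset (s₂ := Set.pi Set.univ fun _ => Set.pi Set.univ fun _ =>
      Set.pi Set.univ fun _ => Metric.closedBall 0 R) ?_ ?_
    · intro α hα
      simp only [Set.mem_pi, Set.mem_univ, forall_const, mem_closedBall_zero_iff]
      exact hα.1
    · exact (isCompact_univ_pi fun _ => isCompact_univ_pi fun _ => isCompact_univ_pi fun _ =>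
        isCompact_closedBall _ _).totallyBounded
  obtain ⟨t, htG, htf, ht⟩ := Metric.finite_approx_of_totallyBounded hG ρ hρ
  have hlift : ∀ α ∈ G, ∃ y' : Mat n B, ‖y'‖ ≤ r ∧ Mat.map1 n q y' = Mat.map1 n q (comb α b) :=
    fun α hα => exists_norm_le_lift _ _ (by rw [comb_map]; exact hα.2)
  choose! y' hy' hqy' using hlift
  refine ⟨htf.toFinset.biUnion fun α => Finset.univ.image fun p : Fin n × Fin n =>
    comb α b p.1 p.2 - y' α p.1 p.2, ?_, ?_⟩
  · intro j hj
    simp only [Finset.mem_biUnion, Set.Finite.mem_toFinset, Finset.mem_image, Finset.mem_univ,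
      true_and] at hj
    obtain ⟨α, hα, p, rfl⟩ := hj
    have h1 := congrFun (congrFun (hqy' α (htG hα)) p.1) p.2
    rw [map_sub, sub_eq_zero]
    exact h1.symm
  · intro e he hJ α hα hαr
    obtain ⟨β, hβt, hβ⟩ : ∃ β ∈ t, dist α β < ρ := by
      have := ht (show α ∈ G from ⟨hα, hαr⟩)
      simpa using this
    have h1 : ‖comb α b - comb β b‖ ≤ δ / 2 := by
      refine (norm_comb_sub_le (ρ := ρ) (fun i j l => ?_) b).trans hρδ
      rw [← dist_eq_norm]
      exact (dist_le_pi_dist (α i j) (β i j) l).trans ((dist_le_pi_dist (α i) (β i) j).trans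
        ((dist_le_pi_dist α β i).trans hβ.le))
    have hd : ‖Mat.diag n B (1 - e)‖ ≤ 1 := (Mat.norm_diag_le _).trans he
    have h2 : ‖(comb α b - comb β b) * Mat.diag n B (1 - e)‖ ≤ δ / 2 :=
      (norm_mul_le _ _).trans (by nlinarith [norm_nonneg (comb α b - comb β b)])
    have h3 : ‖y' β * Mat.diag n B (1 - e)‖ ≤ r :=
      (norm_mul_le _ _).trans (by nlinarith [norm_nonneg (y' β), hy' β (htG hβt)])
    have h4 : ‖(comb β b - y' β) * Mat.diag n B (1 - e)‖ ≤ δ / 2 := by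
      refine le_trans (Mat.norm_le_of_entry _ fun j l => ?_) hε
      have h5 : ((comb β b - y' β) * Mat.diag n B (1 - e)) j l =
          (comb β b j l - y' β j l) * (1 - e) := by
        rw [CStarMatrix.mul_apply]
        simp only [Mat.diag_apply, mul_ite, mul_zero, Finset.sum_ite_eq', Finset.mem_univ, if_true,
          CStarMatrix.sub_apply]
      rw [h5]
      refine hJ _ ?_
      simp only [Finset.mem_biUnion, Set.Finite.mem_toFinset, Finset.mem_image, Finset.mem_univ,
        true_and]
      exact ⟨β, hβt, (j, l), rfl⟩
    rw [comb_mul_diag]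
    have h6 : comb α b * Mat.diag n B (1 - e) = (comb α b - comb β b) * Mat.diag n B (1 - e) +
        (y' β * Mat.diag n B (1 - e) + (comb β b - y' β) * Mat.diag n B (1 - e)) := by
      simp only [sub_mul]; abel
    rw [h6]
    have h7 := norm_add_le ((comb α b - comb β b) * Mat.diag n B (1 - e))
      (y' β * Mat.diag n B (1 - e) + (comb β b - y' β) * Mat.diag n B (1 - e))
    have h8 := norm_add_le (y' β * Mat.diag n B (1 - e))
      ((comb β b - y' β) * Mat.diag n B (1 - e))
    linarith

/-- For matrices of size at most `d`, one element of `ker q` lifts the norm estimates from `C` to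
`B` simultaneously for all good coefficient tuples. -/
theorem exists_good (q : B →⋆ₐ[ℂ] C) (b : Fin m → B) (R r : ℝ) {δ : ℝ} (hδ : 0 < δ) (d : ℕ) :
    ∃ e : B, q e = 0 ∧ ‖1 - e‖ ≤ 1 ∧ ∀ n ≤ d, ∀ α : Fin m → Fin n → Fin n → ℂ,
      (∀ i j l, ‖α i j l‖ ≤ R) → ‖comb α fun i => q (b i)‖ ≤ r →
      ‖comb α fun i => b i * (1 - e)‖ ≤ r + δ := by
  classical
  let ε : ℝ := δ / 2 / (d ^ 2 + 1)
  have hε : 0 < ε := by positivity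
  have hn : ∀ n ≤ d, (n : ℝ) ^ 2 * ε ≤ δ / 2 := fun n hnd => by
    have h1 : (n : ℝ) ^ 2 ≤ d ^ 2 := pow_le_pow_left₀ (Nat.cast_nonneg n) (by exact_mod_cast hnd) 2
    have h2 : ((d : ℝ) ^ 2 + 1) * ε = δ / 2 := by simp only [ε]; field_simp
    nlinarith
  choose! J hJ hJ' using fun n (hnd : n ≤ d) => exists_finset_good q b R r hδ n (hn n hnd)
  obtain ⟨e, he, he1, heJ⟩ := exists_approx_unit q ((Finset.range (d + 1)).biUnion J) (by
    intro j hj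
    obtain ⟨n, hn, hj⟩ := Finset.mem_biUnion.1 hj
    exact hJ n (Nat.lt_succ_iff.1 (Finset.mem_range.1 hn)) j hj) hε
  refine ⟨e, he, he1, fun n hnd => hJ' n hnd e he1 fun j hj => heJ j ?_⟩
  exact Finset.mem_biUnion.2 ⟨n, Finset.mem_range.2 (Nat.lt_succ_of_le hnd), hj⟩

end Comb

/-! ### Ultrapowers -/

section Ultrapower
variable {I : Type} (U : Ultrafilter I) {A : Type} [CStarAlgebra A]

/-- The *-algebra of bounded families in `A`. -/
def bddAlg (I A : Type) [CStarAlgebra A] : StarSubalgebra ℂ (I → A) where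
  carrier := {f | Bdd (A := fun _ => A) f}
  mul_mem' := by
    rintro f g ⟨M, hM⟩ ⟨N, hN⟩
    exact ⟨M * N, fun i => (norm_mul_le _ _).trans
      (mul_le_mul (hM i) (hN i) (norm_nonneg _) ((norm_nonneg _).trans (hM i)))⟩
  add_mem' := by
    rintro f g ⟨M, hM⟩ ⟨N, hN⟩
    exact ⟨M + N, fun i => norm_add_le_of_le (hM i) (hN i)⟩
  algebraMap_mem' c := ⟨‖algebraMap ℂ A c‖, fun i => le_rfl⟩
  star_mem' := by
    rintro f ⟨M, hM⟩
    exact ⟨M, fun i => by simpa using hM i⟩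

theorem mem_bddAlg {f : I → A} : f ∈ bddAlg I A ↔ Bdd (A := fun _ => A) f := Iff.rfl

theorem exists_lim_norm {f : I → A} (hf : Bdd (A := fun _ => A) f) :
    ∃ r, Tendsto (fun i => ‖f i‖) U (𝓝 r) := by
  obtain ⟨M, hM⟩ := hf
  have h1 : IsCompact (Set.Icc 0 M) := isCompact_Icc
  obtain ⟨r, -, hr⟩ := h1.ultrafilter_le_nhds (U.map fun i => ‖f i‖) (by
    rw [le_principal_iff]
    exact Filter.mem_map.2 (Filter.univ_mem' fun i =>
      show ‖f i‖ ∈ Set.Icc 0 M from ⟨norm_nonneg _, hM i⟩))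
  exact ⟨r, hr⟩

/-- The limit of the norms of a bounded family along `U`. -/
def ulimNorm (f : I → A) : ℝ := limUnder (U : Filter I) fun i => ‖f i‖

theorem tendsto_ulimNorm {f : I → A} (hf : Bdd (A := fun _ => A) f) :
    Tendsto (fun i => ‖f i‖) U (𝓝 (ulimNorm U f)) :=
  tendsto_nhds_limUnder (exists_lim_norm U hf)

variable (A) in
/-- Every ultrapower of a C*-algebra exists as a C*-algebra. -/
theorem exists_ultrapower : ∃ (B : Type) (_ : CStarAlgebra B) (π : (I → A) → B),
    IsCStarUltraproduct U (fun _ => A) B π := by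
  classical
  have ht : ∀ x : bddAlg I A, Tendsto (fun i => ‖(x : I → A) i‖) U (𝓝 (ulimNorm U (x : I → A))) :=
    fun x => tendsto_ulimNorm U (mem_bddAlg.1 x.2)
  obtain ⟨D, iD, ρ, hρ, hd⟩ := exists_completion (R := bddAlg I A)
    (fun x => ulimNorm U (x : I → A))
    (fun x y => le_of_tendsto_of_tendsto' (ht (x + y)) ((ht x).add (ht y))
      fun i => norm_add_le _ _)
    (fun c x => tendsto_nhds_unique (ht (c • x)) (((ht x).const_mul ‖c‖).congr
      fun i => (norm_smul c ((x : I → A) i)).symm))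
    (fun x y => le_of_tendsto_of_tendsto' (ht (x * y)) ((ht x).mul (ht y))
      fun i => norm_mul_le _ _)
    (fun x => tendsto_nhds_unique (ht (star x)) ((ht x).congr
      fun i => (norm_star ((x : I → A) i)).symm))
    (fun x => tendsto_nhds_unique (ht (star x * x)) (((ht x).pow 2).congr fun i => by
      change _ = ‖star ((x : I → A) i) * (x : I → A) i‖
      rw [CStarRing.norm_star_mul_self, sq]))
  let π : (I → A) → D := fun f => if hf : f ∈ bddAlg I A then ρ ⟨f, hf⟩ else 0
  have hπ : ∀ f (hf : f ∈ bddAlg I A), π f = ρ ⟨f, hf⟩ := fun f hf => dif_pos hf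
  have hlim : ∀ f, f ∈ bddAlg I A → Tendsto (fun i => ‖f i‖) U (𝓝 ‖π f‖) := fun f hf => by
    rw [hπ f hf, hρ]
    exact ht ⟨f, hf⟩
  have hadd : ∀ f g, f ∈ bddAlg I A → g ∈ bddAlg I A → π (f + g) = π f + π g :=
    fun f g hf hg => by
      rw [hπ f hf, hπ g hg, hπ _ (add_mem hf hg), ← map_add]; rfl
  have hsub : ∀ f g, f ∈ bddAlg I A → g ∈ bddAlg I A → π (f - g) = π f - π g :=
    fun f g hf hg => by
      rw [hπ f hf, hπ g hg, hπ _ (sub_mem hf hg), ← map_sub]; rfl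
  -- changing a family off a set of `U` does not change its class
  have hcongr : ∀ f g, f ∈ bddAlg I A → g ∈ bddAlg I A →
      Tendsto (fun i => ‖f i - g i‖) U (𝓝 0) → π f = π g := fun f g hf hg h0 => by
    rw [← sub_eq_zero, ← norm_eq_zero, ← hsub f g hf hg]
    exact tendsto_nhds_unique (hlim _ (sub_mem hf hg)) h0
  have hlp : ∀ x : lp (fun _ : I => A) ⊤, (x : I → A) ∈ bddAlg I A := fun x =>
    ⟨‖x‖, fun i => lp.norm_apply_le_norm (by simp) x i⟩
  let P : lp (fun _ : I => A) ⊤ →+ D :=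
    { toFun := fun x => π x
      map_zero' := by
        have h0 : ((0 : lp (fun _ : I => A) ⊤) : I → A) = 0 := rfl
        rw [h0, hπ 0 (zero_mem _)]
        exact map_zero ρ
      map_add' := fun x y => hadd x y (hlp x) (hlp y) }
  let P' : NormedAddGroupHom (lp (fun _ : I => A) ⊤) D := P.mkNormedAddGroupHom 1 fun x => by
    rw [one_mul]
    exact le_of_tendsto' (hlim x (hlp x)) fun i => lp.norm_apply_le_norm (by simp) x i
  have hP' : ∀ x, P' x = π x := fun x => rfl
  have hmem : ∀ f, f ∈ bddAlg I A → ∃ x : lp (fun _ : I => A) ⊤, (x : I → A) = f :=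
    fun f ⟨M, hM⟩ => ⟨⟨f, memℓp_infty ⟨M, by rintro _ ⟨i, rfl⟩; exact hM i⟩⟩, rfl⟩
  have hon : P'.SurjectiveOnWith P'.range 2 := by
    rintro _ ⟨x, rfl⟩
    change ∃ g, P' g = P' x ∧ ‖g‖ ≤ 2 * ‖P' x‖
    rcases (norm_nonneg (P' x)).eq_or_lt with h0 | h0
    · exact ⟨0, by rw [map_zero, eq_comm, ← norm_eq_zero, ← h0], by simp [← h0]⟩
    · have hS : ∀ᶠ i in (U : Filter I), ‖(x : I → A) i‖ < 2 * ‖P' x‖ :=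
        (hlim x (hlp x)).eventually_lt_const (by rw [← hP']; linarith)
      let f : I → A := fun i => if ‖(x : I → A) i‖ < 2 * ‖P' x‖ then (x : I → A) i else 0
      have hf : ∀ i, ‖f i‖ ≤ 2 * ‖P' x‖ := fun i => by
        simp only [f]; split_ifs with h
        · exact h.le
        · rw [norm_zero]; positivity
      obtain ⟨y, hy⟩ := hmem f ⟨_, hf⟩
      refine ⟨y, ?_, ?_⟩
      · rw [hP', hP', hy]
        refine hcongr f x ⟨_, hf⟩ (hlp x) (tendsto_const_nhds.congr' ?_)
        filter_upwards [hS] with i hi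
        simp only [f, if_pos hi, sub_self, norm_zero]
      · refine lp.norm_le_of_forall_le (by positivity) fun i => ?_
        rw [hy]; exact hf i
  have hsurj : ∀ b : D, ∃ f ∈ bddAlg I A, π f = b := fun b => by
    have h1 := controlled_closure_of_complete (by norm_num) one_pos hon
    have h2 : b ∈ P'.range.topologicalClosure := by
      have h3 : DenseRange P' := by
        refine hd.mono ?_
        rintro _ ⟨f, rfl⟩
        obtain ⟨x, hx⟩ := hmem f f.2
        exact ⟨x, by rw [hP', hx, hπ _ f.2]⟩
      exact h3 b
    obtain ⟨x, hx, -⟩ := h1 b h2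
    exact ⟨x, hlp x, hx⟩
  refine ⟨D, iD, π, ?_⟩
  refine ⟨?_, hadd, ?_, ?_, ?_, hlim, fun b => ?_⟩
  · rw [hπ 1 (one_mem _)]; exact map_one ρ
  · intro f g hf hg
    rw [hπ f hf, hπ g hg, hπ _ (mul_mem hf hg), ← map_mul]; rfl
  · intro f hf
    rw [hπ f hf, hπ _ (star_mem hf), ← map_star]; rfl
  · intro c f hf
    rw [hπ f hf, hπ (c • f) ((bddAlg I A).smul_mem hf c), ← map_smul]; rfl
  · obtain ⟨f, hf, rfl⟩ := hsurj b
    let s : I → ℝ := fun i => ‖π f‖ / max ‖π f‖ ‖f i‖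
    let g : I → A := fun i => ((s i : ℝ) : ℂ) • f i
    have hs0 : ∀ i, 0 ≤ s i := fun i => by positivity
    have hg : ∀ i, ‖g i‖ ≤ ‖π f‖ := fun i => by
      have h1 : ‖g i‖ = s i * ‖f i‖ := by
        simp only [g, norm_smul, Complex.norm_real, Real.norm_eq_abs, abs_of_nonneg (hs0 i)]
      rw [h1]
      simp only [s]
      rw [div_mul_eq_mul_div]
      exact div_le_of_le_mul₀ (by positivity) (norm_nonneg _)
        (mul_le_mul_of_nonneg_left (le_max_right _ _) (norm_nonneg _))
    refine ⟨g, hg, hcongr g f ⟨_, hg⟩ hf ?_⟩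
    have h2 : ∀ i, ‖g i - f i‖ = max ‖π f‖ ‖f i‖ - ‖π f‖ := fun i => by
      have h3 : g i - f i = ((s i - 1 : ℝ) : ℂ) • f i := by
        simp only [g]; push_cast; rw [sub_smul, one_smul]
      have h4 : s i ≤ 1 := div_le_one_of_le₀ (le_max_left _ _) (by positivity)
      rw [h3, norm_smul, Complex.norm_real, Real.norm_eq_abs, abs_of_nonpos (by linarith)]
      rcases le_total ‖f i‖ ‖π f‖ with h5 | h5
      · rcases (norm_nonneg (π f)).eq_or_lt with h6 | h6
        · have h7 : ‖f i‖ = 0 := le_antisymm (h5.trans h6.symm.le) (norm_nonneg _)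
          rw [h7, mul_zero, max_eq_left (norm_nonneg _), sub_self]
        · simp only [s, max_eq_left h5, div_self h6.ne']; simp
      · simp only [s, max_eq_right h5]
        rcases (norm_nonneg (f i)).eq_or_lt with h6 | h6
        · rw [← h6] at h5 ⊢
          rw [le_antisymm h5 (norm_nonneg _)]; simp
        · field_simp
          ring
    simp only [h2]
    have h3 := ((tendsto_const_nhds (x := ‖π f‖)).max (hlim f hf)).sub_const ‖π f‖
    rwa [max_self, sub_self] at h3

end Ultrapower

section Entry

/-- A norm bound witnessed by an algebraic identity, which passes to ultrapowers. -/
theorem norm_le_of_sq_eq {D : Type} [CStarAlgebra D] {S T : D} {R : ℝ} (hR : 0 ≤ R)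
    (h : R ^ 2 • (1 : D) - star T * T = star S * S) : ‖T‖ ≤ R := by
  rcases subsingleton_or_nontrivial D with hD | hD
  · rwa [Subsingleton.elim T 0, norm_zero]
  have h1 : star T * T ≤ R ^ 2 • (1 : D) := sub_nonneg.1 (h ▸ star_mul_self_nonneg S)
  have h2 := CStarAlgebra.norm_le_norm_of_nonneg_of_le (star_mul_self_nonneg T) h1
  rw [CStarRing.norm_star_mul_self, norm_smul, CStarRing.norm_one, mul_one, Real.norm_eq_abs,
    abs_of_nonneg (sq_nonneg R), ← sq] at h2
  exact le_of_sq_le_sq h2 hR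

/-- The converse of `norm_le_of_sq_eq`, with control of the norm of the witness. -/
theorem exists_sq_eq {D : Type} [CStarAlgebra D] {T : D} {R : ℝ} (hT : ‖T‖ ≤ R) :
    ∃ S : D, R ^ 2 • (1 : D) - star T * T = star S * S ∧ ‖S‖ ≤ R := by
  have hR := (norm_nonneg T).trans hT
  rcases subsingleton_or_nontrivial D with hD | hD
  · exact ⟨0, Subsingleton.elim _ _, by rwa [norm_zero]⟩
  have h1 : star T * T ≤ R ^ 2 • (1 : D) := by
    have h2 := IsSelfAdjoint.le_algebraMap_norm_self (IsSelfAdjoint.star_mul_self T)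
    refine h2.trans ?_
    rw [Algebra.algebraMap_eq_smul_one]
    refine smul_le_smul_of_nonneg_right ?_ zero_le_one
    rw [CStarRing.norm_star_mul_self, ← sq]
    exact pow_le_pow_left₀ (norm_nonneg _) hT 2
  obtain ⟨S, hS⟩ := CStarAlgebra.nonneg_iff_eq_star_mul_self.1 (sub_nonneg.2 h1)
  refine ⟨S, hS, ?_⟩
  have h3 : star S * S ≤ R ^ 2 • (1 : D) := by
    rw [← hS]; exact sub_le_self _ (star_mul_self_nonneg T)
  refine norm_le_of_sq_eq (S := T) hR ?_
  rw [← hS, sub_sub_cancel]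

variable {I : Type} {U : Ultrafilter I} {A B : Type} [CStarAlgebra A] [CStarAlgebra B]
  {π : (I → A) → B} {n : ℕ}

theorem Bdd.add' {f g : I → A} (hf : Bdd (A := fun _ => A) f) (hg : Bdd (A := fun _ => A) g) :
    Bdd (A := fun _ => A) (f + g) := (bddAlg I A).add_mem hf hg

theorem Bdd.smul' (c : ℂ) {f : I → A} (hf : Bdd (A := fun _ => A) f) :
    Bdd (A := fun _ => A) (c • f) := (bddAlg I A).smul_mem hf c

theorem bdd_const (a : A) : Bdd (A := fun _ => A) (fun _ : I => a) := ⟨‖a‖, fun _ => le_rfl⟩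

/-- The diagonal embedding into an ultrapower. -/
def IsCStarUltraproduct.const (hπ : IsCStarUltraproduct U (fun _ => A) B π) : A →⋆ₐ[ℂ] B where
  toFun a := π fun _ => a
  map_one' := hπ.map_one
  map_mul' a b := hπ.map_mul _ _ (bdd_const a) (bdd_const b)
  map_zero' := by
    have := hπ.map_smul 0 (fun _ => 0) (bdd_const 0)
    rw [zero_smul, zero_smul] at this
    exact this
  map_add' a b := hπ.map_add _ _ (bdd_const a) (bdd_const b)
  commutes' c := by
    rw [Algebra.algebraMap_eq_smul_one, Algebra.algebraMap_eq_smul_one, ← hπ.map_one]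
    exact hπ.map_smul c _ (bdd_const 1)
  map_star' a := hπ.map_star _ (bdd_const a)

theorem IsCStarUltraproduct.const_apply (hπ : IsCStarUltraproduct U (fun _ => A) B π) (a : A) :
    hπ.const a = π fun _ => a := rfl

theorem IsCStarUltraproduct.map_sum (hπ : IsCStarUltraproduct U (fun _ => A) B π) {ι : Type}
    (s : Finset ι) (f : ι → I → A) (hf : ∀ k, Bdd (A := fun _ => A) (f k)) :
    Bdd (A := fun _ => A) (∑ k ∈ s, f k) ∧ π (∑ k ∈ s, f k) = ∑ k ∈ s, π (f k) := by
  classical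
  induction s using Finset.induction_on with
  | empty => exact ⟨bdd_const 0, hπ.const.map_zero⟩
  | insert k s hk ih =>
    rw [Finset.sum_insert hk, Finset.sum_insert hk]
    exact ⟨(hf k).add' ih.1, by rw [hπ.map_add _ _ (hf k) ih.1, ih.2]⟩

/-- The norm of a matrix over an ultrapower is at most any `U`-eventual bound of the norms of
representing matrices. -/
theorem IsCStarUltraproduct.norm_matrix_le (hπ : IsCStarUltraproduct U (fun _ => A) B π)
    (T : I → Mat n A) {R : ℝ} (hR : 0 ≤ R) (hb : ∃ M, ∀ i, ‖T i‖ ≤ M)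
    (hT : ∀ᶠ i in (U : Filter I), ‖T i‖ ≤ R) :
    ‖(CStarMatrix.ofMatrix fun j l => π fun i => T i j l : Mat n B)‖ ≤ R := by
  classical
  obtain ⟨M, hM⟩ := hb
  -- off a set of `U` replace the matrices by `0`, so that the bound holds everywhere
  let T' : I → Mat n A := fun i => if ‖T i‖ ≤ R then T i else 0
  have hT' : ∀ i, ‖T' i‖ ≤ R := fun i => by
    simp only [T']; split_ifs with h
    · exact h
    · rwa [norm_zero]
  have hbdd : ∀ j l, Bdd (A := fun _ => A) fun i => T i j l := fun j l =>
    ⟨M, fun i => (CStarMatrix.norm_entry_le_norm).trans (hM i)⟩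
  have hbdd' : ∀ j l, Bdd (A := fun _ => A) fun i => T' i j l := fun j l =>
    ⟨R, fun i => (CStarMatrix.norm_entry_le_norm).trans (hT' i)⟩
  choose S hS hSn using fun i => exists_sq_eq (hT' i)
  have hbS : ∀ j l, Bdd (A := fun _ => A) fun i => S i j l := fun j l =>
    ⟨R, fun i => (CStarMatrix.norm_entry_le_norm).trans (hSn i)⟩
  have hsq : ∀ T : I → Mat n A, (∀ j l, Bdd (A := fun _ => A) fun i => T i j l) → ∀ j l,
      Bdd (A := fun _ => A) (fun i => (star (T i) * T i) j l) ∧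
      π (fun i => (star (T i) * T i) j l) =
        (star (CStarMatrix.ofMatrix fun j l => π fun i => T i j l : Mat n B) *
          (CStarMatrix.ofMatrix fun j l => π fun i => T i j l : Mat n B)) j l := by
    intro T hT j l
    have hm : ∀ k, Bdd (A := fun _ => A) ((star fun i => T i k j) * fun i => T i k l) := fun k =>
      (bddAlg I A).mul_mem ((bddAlg I A).star_mem' (hT k j)) (hT k l)
    have h1 := hπ.map_sum Finset.univ (fun k => (star fun i => T i k j) * fun i => T i k l) hm
    have h2 : (fun i => (star (T i) * T i) j l) =
        ∑ k, ((star fun i => T i k j) * fun i => T i k l) := by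
      funext i
      rw [CStarMatrix.mul_apply, Finset.sum_apply]
      exact Finset.sum_congr rfl fun k _ => by rw [CStarMatrix.star_apply]; rfl
    rw [h2]
    refine ⟨h1.1, h1.2.trans ?_⟩
    rw [CStarMatrix.mul_apply]
    refine Finset.sum_congr rfl fun k _ => ?_
    rw [hπ.map_mul _ _ ((bddAlg I A).star_mem' (hT k j)) (hT k l), hπ.map_star _ (hT k j),
      CStarMatrix.star_apply]
    rfl
  have hTT' : (CStarMatrix.ofMatrix fun j l => π fun i => T i j l : Mat n B) =
      CStarMatrix.ofMatrix fun j l => π fun i => T' i j l := by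
    ext j l
    simp only [Mat.of_entry]
    have hneg := (hbdd' j l).smul' (-1 : ℂ)
    rw [← sub_eq_zero, ← norm_eq_zero, sub_eq_add_neg, ← neg_one_smul ℂ (π fun i => T' i j l),
      ← hπ.map_smul _ _ (hbdd' j l), ← hπ.map_add _ _ (hbdd j l) hneg]
    refine tendsto_nhds_unique (hπ.norm_eq _ ((hbdd j l).add' hneg))
      (tendsto_const_nhds.congr' ?_)
    filter_upwards [hT] with i hi
    have he : T' i = T i := if_pos hi
    change 0 = ‖T i j l + (-1 : ℂ) • T' i j l‖
    rw [he, neg_one_smul, add_neg_cancel, norm_zero]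
  rw [hTT']
  refine norm_le_of_sq_eq (S := CStarMatrix.ofMatrix fun j l => π fun i => S i j l) hR ?_
  ext j l
  have h2 : ∀ (D : Type) [CStarAlgebra D], (R ^ 2 • (1 : Mat n D)) j l =
      ((R ^ 2 : ℝ) : ℂ) • (if j = l then (1 : D) else 0) := fun D _ => by
    rw [Complex.coe_smul, ← CStarMatrix.one_apply]; rfl
  have h3 : hπ.const (((R ^ 2 : ℝ) : ℂ) • (if j = l then (1 : A) else 0)) =
      ((R ^ 2 : ℝ) : ℂ) • (if j = l then (1 : B) else 0) := by
    rw [_root_.map_smul hπ.const]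
    split_ifs <;> simp
  have h1 : (fun i => (star (S i) * S i) j l) + (fun i => (star (T' i) * T' i) j l) =
      fun _ => ((R ^ 2 : ℝ) : ℂ) • (if j = l then (1 : A) else 0) := by
    funext i
    have h4 : (R ^ 2 • (1 : Mat n A)) j l - (star (T' i) * T' i) j l = (star (S i) * S i) j l :=
      congrFun (congrFun (hS i) j) l
    rw [Pi.add_apply, ← h4, sub_add_cancel, h2]
  have key : (R ^ 2 • (1 : Mat n B)) j l -
      (star (CStarMatrix.ofMatrix fun j l => π fun i => T' i j l : Mat n B) *
          (CStarMatrix.ofMatrix fun j l => π fun i => T' i j l : Mat n B)) j l =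
      (star (CStarMatrix.ofMatrix fun j l => π fun i => S i j l : Mat n B) *
          (CStarMatrix.ofMatrix fun j l => π fun i => S i j l : Mat n B)) j l := by
    rw [← (hsq T' hbdd' j l).2, ← (hsq S hbS j l).2, sub_eq_iff_eq_add,
      ← hπ.map_add _ _ (hsq S hbS j l).1 (hsq T' hbdd' j l).1, h1, ← hπ.const_apply, h2, h3]
  exact key

end Entry

/-! ### Frames: approximate matrix units -/

section Coef
variable {A B C : Type} [CStarAlgebra A] [CStarAlgebra B] [CStarAlgebra C] {m n k : ℕ}

/-- The scalar matrices `(φ (c_j^* a_i c_l))_{j,l}`, the compressions of the `a i`. -/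
def coef (φ : A →ₗ[ℂ] ℂ) (c : Fin n → A) (a : Fin m → A) : Fin m → Fin n → Fin n → ℂ :=
  fun i j l => φ (star (c j) * (a i * c l))

theorem amp_eq_comb (φ : A →ₗ[ℂ] ℂ) (c : Fin n → A) (a : Fin m → A) (b : Fin m → B) :
    amp φ c (∑ i, a i ⊗ₜ[ℂ] b i) = comb (coef φ c a) b := amp_sum φ c a b

/-- The compressions are contractive entrywise. -/
theorem norm_coef_le {φ : A →ₗ[ℂ] ℂ} (hφ : Excisable φ) {c : Fin n → A} (hc : ON φ c)
    (a : Fin m → A) (i j l) : ‖coef φ c a i j l‖ ≤ ‖a i‖ := by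
  have h1 := norm_amp_le (B := ℂ) hφ hc (a i ⊗ₜ 1)
  have h2 : minNorm A ℂ (a i ⊗ₜ 1) ≤ ‖a i‖ := by
    obtain ⟨ν, hν, -⟩ := exists_spatial_norm A ℂ
    obtain ⟨D, iD, ι, κ, hc, h0, hn⟩ := hν.exists_model
    refine (minNorm_le_of_norm hν _).trans ?_
    have h3 := hn 1 (fun _ => a i) (fun _ => 1)
    simp only [Finset.univ_unique, Finset.sum_const, Finset.card_singleton, one_smul, map_one,
      mul_one] at h3
    rw [← h3]
    exact NonUnitalStarAlgHom.norm_apply_le (ι : A →⋆ₙₐ[ℂ] D) (a i)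
  have h4 : ‖amp φ c (a i ⊗ₜ[ℂ] (1 : ℂ)) j l‖ ≤ ‖amp φ c (a i ⊗ₜ[ℂ] (1 : ℂ))‖ :=
    CStarMatrix.norm_entry_le_norm
  refine le_trans (le_of_eq ?_) (h4.trans (h1.trans h2))
  simp [amp_entry, coef]

/-- Approximate rank-`k` frames: `f` has norm one and the `v j` are approximately orthogonal with
`v_j^* v_j` close to `f^* f`, so that the `v_j v_l^*` behave like matrix units of size `k`. -/
def Frame (ε : ℝ) (f : A) (v : Fin k → A) : Prop :=
  ‖f‖ = 1 ∧ ∀ j l, ‖star (v j) * v l - if j = l then star f * f else 0‖ ≤ ε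

theorem Frame.mono {ε ε' : ℝ} (h : ε ≤ ε') {f : A} {v : Fin k → A} (hv : Frame ε f v) :
    Frame ε' f v := ⟨hv.1, fun j l => (hv.2 j l).trans h⟩

theorem Frame.norm_sq {ε : ℝ} {f : A} {v : Fin k → A} (hv : Frame ε f v) : ‖star f * f‖ = 1 := by
  rw [CStarRing.norm_star_mul_self, hv.1, one_mul]

theorem Frame.norm_le {ε : ℝ} (hε : ε ≤ 1) {f : A} {v : Fin k → A} (hv : Frame ε f v) (j) :
    ‖v j‖ ≤ 2 := by
  have h1 := hv.2 j j
  rw [if_pos rfl] at h1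
  have h2 : ‖star (v j) * v j‖ ≤ 2 := by
    have h3 := norm_add_le (star (v j) * v j - star f * f) (star f * f)
    rw [sub_add_cancel, hv.norm_sq] at h3
    linarith
  rw [CStarRing.norm_star_mul_self] at h2
  nlinarith [norm_nonneg (v j)]

/-- An excisable functional with `n` orthonormal vectors provides frames of every size `k ≤ n`. -/
theorem Excisable.exists_frame {φ : A →ₗ[ℂ] ℂ} (hφ : Excisable φ) {c : Fin n → A} (hc : ON φ c)
    (hk : k ≤ n) {ε : ℝ} (hε : 0 < ε) : ∃ (f : A) (v : Fin k → A), Frame ε f v := by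
  classical
  obtain ⟨e, he, h⟩ := hφ (Finset.univ.image fun p : Fin n × Fin n => star (c p.1) * c p.2) ε hε
  refine ⟨e, fun j => c (Fin.castLE hk j) * e, he, fun j l => ?_⟩
  have h1 := h _ (Finset.mem_image_of_mem _
    (Finset.mem_univ (Fin.castLE hk j, Fin.castLE hk l)))
  simp only at h1
  rw [hc] at h1
  refine le_trans (le_of_eq ?_) h1
  congr 1
  rw [star_mul]
  by_cases hjl : j = l
  · simp [hjl, mul_assoc]
  · have : Fin.castLE hk j ≠ Fin.castLE hk l := fun h => hjl (Fin.castLE_injective hk h)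
    simp [hjl, mul_assoc]

/-- The image of a scalar matrix under the approximate matrix units `v_j v_l^*`. -/
def rep (t : Fin k → Fin k → ℂ) (v : Fin k → A) : A := ∑ j, ∑ l, t j l • (v j * star (v l))

/-- The row with entries `v j` is almost a contraction. -/
theorem Frame.norm_sum_mul_star_le {ε : ℝ} {f : A} {v : Fin k → A} (hv : Frame ε f v) :
    ‖∑ j, v j * star (v j)‖ ≤ 1 + k ^ 2 * ε := by
  rcases k with _ | k
  · simp
  let V : Mat (k + 1) A := CStarMatrix.ofMatrix fun i l => if i = 0 then v l else 0
  have h1 : star V * V = CStarMatrix.ofMatrix fun j l => star (v j) * v l := by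
    ext j l
    simp [V, CStarMatrix.mul_apply, CStarMatrix.star_apply]
  have h2 : (V * star V) 0 0 = ∑ j, v j * star (v j) := by
    simp [V, CStarMatrix.mul_apply, CStarMatrix.star_apply]
  have h3 : ‖star V * V‖ ≤ 1 + (k + 1 : ℕ) ^ 2 * ε := by
    rw [h1, ← hv.norm_sq]
    exact Mat.norm_near_diag _ _ hv.2
  rw [← h2]
  refine le_trans CStarMatrix.norm_entry_le_norm ?_
  rw [CStarRing.norm_self_mul_star, ← CStarRing.norm_star_mul_self]
  exact h3

end Coef

/-! ### Transferring compressions into `A` -/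

section Transfer
variable {A B D : Type} [CStarAlgebra A] [CStarAlgebra B] [CStarAlgebra D] {m n k : ℕ}

/-- Conjugation by the row `G = ∑ j, v_j ⊗ (u_j e)^*`, with `e` excising `ψ`, approximates
`Y ↦ ∑ j l, ψ (u_j^* Y u_l) v_j v_l^* ⊗ e^* e`. -/
theorem norm_row_conj_sub_le (ι : A →⋆ₐ[ℂ] D) (κ : B →⋆ₐ[ℂ] D)
    (hc : ∀ a b, Commute (ι a) (κ b)) {v : Fin k → A} (hv : ∀ j, ‖v j‖ ≤ 2) (u : Fin k → B) (e : B)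
    (ψ : B →ₗ[ℂ] ℂ) (Y : B) {ε : ℝ}
    (h : ∀ j l, ‖star e * (star (u j) * (Y * u l)) * e -
      ψ (star (u j) * (Y * u l)) • (star e * e)‖ ≤ ε) :
    ‖(∑ j, ι (v j) * κ (star (u j * e))) * κ Y * star (∑ j, ι (v j) * κ (star (u j * e))) -
      ι (rep (fun j l => ψ (star (u j) * (Y * u l))) v) * κ (star e * e)‖ ≤
      k ^ 2 * (4 * ε) := by
  have hι : ∀ a, ‖ι a‖ ≤ ‖a‖ := NonUnitalStarAlgHom.norm_apply_le (ι : A →⋆ₙₐ[ℂ] D)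
  have hκ : ∀ a, ‖κ a‖ ≤ ‖a‖ := NonUnitalStarAlgHom.norm_apply_le (κ : B →⋆ₙₐ[ℂ] D)
  have h1 : (∑ j, ι (v j) * κ (star (u j * e))) * κ Y *
      star (∑ j, ι (v j) * κ (star (u j * e))) -
      ι (rep (fun j l => ψ (star (u j) * (Y * u l))) v) * κ (star e * e) =
      ∑ j, ∑ l, ι (v j * star (v l)) * κ (star e * (star (u j) * (Y * u l)) * e -
        ψ (star (u j) * (Y * u l)) • (star e * e)) := by
    simp only [map_sub, mul_sub, Finset.sum_sub_distrib, rep, map_sum, map_smul, Finset.sum_mul,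
      Finset.mul_sum, star_sum]
    congr 1
    · rw [Finset.sum_comm]
      refine Finset.sum_congr rfl fun j _ => Finset.sum_congr rfl fun l _ => ?_
      have h2 : star (ι (v l) * κ (star (u l * e))) = ι (star (v l)) * κ (u l * e) := by
        rw [star_mul, ← map_star, ← map_star, star_star, (hc _ _).eq]
      rw [h2, mul_assoc (ι (v j)), ← map_mul κ, mul_assoc (ι (v j)),
        ← mul_assoc (κ _) (ι (star (v l))), ← (hc (star (v l)) _).eq, mul_assoc (ι (star (v l))),
        ← map_mul κ, ← mul_assoc, ← map_mul ι]
      congr 2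
      simp only [star_mul, mul_assoc]
    · refine Finset.sum_congr rfl fun j _ => Finset.sum_congr rfl fun l _ => ?_
      rw [smul_mul_assoc, mul_smul_comm]
  rw [h1]
  have h2 : ∀ j l, ‖ι (v j * star (v l)) * κ (star e * (star (u j) * (Y * u l)) * e -
      ψ (star (u j) * (Y * u l)) • (star e * e))‖ ≤ 4 * ε := fun j l => by
    refine (norm_mul_le _ _).trans (mul_le_mul ?_ ((hκ _).trans (h j l)) (norm_nonneg _)
      (by norm_num))
    refine (hι _).trans ((norm_mul_le _ _).trans ?_)
    rw [norm_star]
    nlinarith [hv j, hv l, norm_nonneg (v j), norm_nonneg (v l)]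
  refine (norm_sum_le_of_le _ fun j _ => norm_sum_le_of_le _ fun l _ => h2 j l).trans ?_
  simp only [Finset.sum_const, Finset.card_univ, Fintype.card_fin, nsmul_eq_mul]
  exact le_of_eq (by ring)

/-- The map `b_i ↦ ∑ j l, ψ (u_j^* b_i u_l) v_j v_l^*` is almost completely contractive when `v` is
a sufficiently good frame, uniformly for coefficient matrices of size at most `d` and entries at most
`R`. -/
theorem exists_upper (A : Type) [CStarAlgebra A] {ψ : B →ₗ[ℂ] ℂ} (hψ : Excisable ψ)
    {u : Fin k → B} (hu : ON ψ u) (b : Fin m → B) {R : ℝ} (hR : 0 ≤ R) (d : ℕ) {η : ℝ}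
    (hη : 0 < η) :
    ∃ ε : ℝ, 0 < ε ∧ ∀ (f : A) (v : Fin k → A), Frame ε f v → ∀ n ≤ d,
      ∀ α : Fin m → Fin n → Fin n → ℂ, (∀ i j l, ‖α i j l‖ ≤ R) →
      ‖comb α fun i => rep (coef ψ u b i) v‖ ≤ (1 + η) * ‖comb α b‖ + η := by
  classical
  let ε : ℝ := min 1 (η / (2 * (k ^ 2 + 1)))
  have hε : 0 < ε := by positivity
  have hε1 : ε ≤ 1 := min_le_left _ _
  have hεk : (k : ℝ) ^ 2 * ε ≤ η / 2 := by
    have h1 : ε * (2 * (k ^ 2 + 1)) ≤ η := (le_div_iff₀ (by positivity)).1 (min_le_right _ _)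
    nlinarith
  let τ : ℝ := η / (2 * (k ^ 2 * 4 + 1) * (d ^ 2 * (m * R) + 1))
  have hτ : 0 < τ := by positivity
  have hτ' : τ * (2 * (k ^ 2 * 4 + 1) * (d ^ 2 * (m * R) + 1)) = η := by
    simp only [τ]; field_simp
  have hS : 0 ≤ (d : ℝ) ^ 2 * (m * R) := by positivity
  have hK : 0 ≤ (k : ℝ) ^ 2 * (4 * τ) := by positivity
  have hτ1 : (k : ℝ) ^ 2 * (4 * τ) ≤ η / 2 := by nlinarith [mul_nonneg hS hK, mul_nonneg hS hτ.le]
  have hτ2 : (d : ℝ) ^ 2 * (m * R) * (k ^ 2 * (4 * τ)) ≤ η := by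
    nlinarith [mul_nonneg hS hK, mul_nonneg hS hτ.le]
  refine ⟨ε, hε, fun f v hv n hnd α hα => ?_⟩
  obtain ⟨e, he, hex⟩ := hψ (((insert 1 (Finset.univ.image b)) ×ˢ
    (Finset.univ : Finset (Fin k × Fin k))).image
      fun p => star (u p.2.1) * (p.1 * u p.2.2)) τ hτ
  have hexY : ∀ Y ∈ insert 1 (Finset.univ.image b), ∀ j l,
      ‖star e * (star (u j) * (Y * u l)) * e - ψ (star (u j) * (Y * u l)) • (star e * e)‖ ≤ τ :=
    fun Y hY j l => hex _ (Finset.mem_image.2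
      ⟨(Y, (j, l)), Finset.mem_product.2 ⟨hY, Finset.mem_univ _⟩, rfl⟩)
  have hee : ‖star e * e‖ = 1 := by rw [CStarRing.norm_star_mul_self, he, one_mul]
  obtain ⟨ν, hν, -⟩ := exists_spatial_norm A B
  obtain ⟨D, iD, ι, κ, hc, h0, -⟩ := hν.exists_model
  have hι : ∀ a, ‖ι a‖ ≤ ‖a‖ := NonUnitalStarAlgHom.norm_apply_le (ι : A →⋆ₙₐ[ℂ] D)
  have hκ : ∀ a, ‖κ a‖ ≤ ‖a‖ := NonUnitalStarAlgHom.norm_apply_le (κ : B →⋆ₙₐ[ℂ] D)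
  let G : D := ∑ j, ι (v j) * κ (star (u j * e))
  have hG : ∀ Y ∈ insert 1 (Finset.univ.image b), ‖G * κ Y * star G -
      ι (rep (fun j l => ψ (star (u j) * (Y * u l))) v) * κ (star e * e)‖ ≤ k ^ 2 * (4 * τ) :=
    fun Y hY => norm_row_conj_sub_le ι κ hc (hv.norm_le hε1) u e ψ Y (hexY Y hY)
  have hGG : ‖G‖ * ‖G‖ ≤ 1 + η := by
    have h1 := hG 1 (Finset.mem_insert_self _ _)
    have h2 : rep (fun j l => ψ (star (u j) * (1 * u l))) v = ∑ j, v j * star (v j) := by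
      simp only [rep, one_mul]
      refine Finset.sum_congr rfl fun j _ => ?_
      simp [hu j]
    rw [map_one, mul_one, h2] at h1
    have h3 : ‖ι (∑ j, v j * star (v j)) * κ (star e * e)‖ ≤ 1 + k ^ 2 * ε := by
      refine (norm_mul_le _ _).trans ?_
      have h4 := (hι _).trans hv.norm_sum_mul_star_le
      have h5 := (hκ _).trans hee.le
      nlinarith [norm_nonneg (ι (∑ j, v j * star (v j))), norm_nonneg (κ (star e * e))]
    rw [← CStarRing.norm_self_mul_star]
    have h6 := norm_add_le (G * star G - ι (∑ j, v j * star (v j)) * κ (star e * e))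
      (ι (∑ j, v j * star (v j)) * κ (star e * e))
    rw [sub_add_cancel] at h6
    linarith
  let M : Mat n D := Mat.diag n D G * Mat.map n (κ : B →⋆ₙₐ[ℂ] D) (comb α b) *
    star (Mat.diag n D G)
  have hM : ‖M‖ ≤ (1 + η) * ‖comb α b‖ := by
    have h1 : ‖Mat.diag n D G‖ ≤ ‖G‖ := Mat.norm_diag_le G
    have h2 := Mat.norm_map_le (n := n) (κ : B →⋆ₙₐ[ℂ] D) (comb α b)
    calc ‖M‖ ≤ ‖Mat.diag n D G‖ * ‖Mat.map n (κ : B →⋆ₙₐ[ℂ] D) (comb α b)‖ *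
          ‖star (Mat.diag n D G)‖ :=
          (norm_mul_le _ _).trans (mul_le_mul_of_nonneg_right (norm_mul_le _ _) (norm_nonneg _))
      _ ≤ ‖G‖ * ‖comb α b‖ * ‖G‖ := by
          rw [norm_star]
          gcongr
      _ = (‖G‖ * ‖G‖) * ‖comb α b‖ := by ring
      _ ≤ _ := mul_le_mul_of_nonneg_right hGG (norm_nonneg _)
  have hMe : ∀ p q, M p q = G * κ (comb α b p q) * star G := fun p q => by
    have h1 : star (Mat.diag n D G) = Mat.diag n D (star G) := (map_star _ _).symm
    simp only [M, h1, CStarMatrix.mul_apply, Mat.diag_apply, ite_mul, zero_mul, mul_ite, mul_zero,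
      Finset.sum_ite_eq, Finset.sum_ite_eq', Finset.mem_univ, if_true]
    rfl
  have hcross := Mat.cross_norm (κ : B →⋆ₙₐ[ℂ] D) (ι : A →⋆ₙₐ[ℂ] D) (fun a b => (hc b a).symm)
    (fun a b hab => (h0 b a (by rw [(hc b a).eq]; exact hab)).symm) (star e * e)
    (comb α fun i => rep (coef ψ u b i) v)
  rw [hee, one_mul] at hcross
  refine hcross.trans ((Mat.norm_near M _ (ε := m * R * (k ^ 2 * (4 * τ))) fun p q => ?_).trans ?_)
  · rw [hMe, Mat.of_entry]
    have h1 : G * κ (comb α b p q) * star G - (κ : B →⋆ₙₐ[ℂ] D) (star e * e) *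
        (ι : A →⋆ₙₐ[ℂ] D) ((comb α fun i => rep (coef ψ u b i) v) p q) =
        ∑ i, α i p q • (G * κ (b i) * star G - ι (rep (coef ψ u b i) v) * κ (star e * e)) := by
      change G * κ (comb α b p q) * star G - κ (star e * e) *
        ι ((comb α fun i => rep (coef ψ u b i) v) p q) = _
      rw [← (hc _ _).eq, comb_entry, comb_entry]
      simp only [map_sum, map_smul, Finset.mul_sum, Finset.sum_mul, smul_sub,
        Finset.sum_sub_distrib, smul_mul_assoc, mul_smul_comm]
    rw [h1]
    refine (norm_sum_le_of_le _ fun i _ => (norm_smul_le _ _).trans (mul_le_mul (hα i p q)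
      (hG (b i) (Finset.mem_insert_of_mem (Finset.mem_image_of_mem b (Finset.mem_univ i))))
      (norm_nonneg _) hR)).trans ?_
    simp only [Finset.sum_const, Finset.card_univ, Fintype.card_fin, nsmul_eq_mul]
    exact le_of_eq (by ring)
  · have h1 : (n : ℝ) ^ 2 ≤ d ^ 2 := pow_le_pow_left₀ (Nat.cast_nonneg n) (by exact_mod_cast hnd) 2
    have h2 : (n : ℝ) ^ 2 * (m * R * (k ^ 2 * (4 * τ))) ≤ d ^ 2 * (m * R * (k ^ 2 * (4 * τ))) :=
      mul_le_mul_of_nonneg_right h1 (by positivity)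
    linarith

/-- The compression `v_j^* (v_p v_q^*) v_l` of an approximate matrix unit is close to `(f^* f)^2` if
`j = p` and `q = l`, and to `0` otherwise. -/
theorem norm_frame_mul_sub_le {ε : ℝ} (hε : ε ≤ 1) {f : A} {v : Fin k → A} (hv : Frame ε f v)
    (j p q l : Fin k) : ‖star (v j) * v p * (star (v q) * v l) -
      (if j = p then star f * f else 0) * (if q = l then star f * f else 0)‖ ≤ 3 * ε := by
  have hε0 : 0 ≤ ε := (norm_nonneg _).trans (hv.2 j j)
  have hd : ∀ j p : Fin k, ‖(if j = p then star f * f else 0)‖ ≤ 1 := fun j p => by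
    split_ifs
    · exact hv.norm_sq.le
    · simp
  have h1 : ‖star (v q) * v l‖ ≤ 2 := by
    have h2 := norm_add_le (star (v q) * v l - if q = l then star f * f else 0)
      (if q = l then star f * f else 0)
    rw [sub_add_cancel] at h2
    linarith [hv.2 q l, hd q l]
  have h2 : star (v j) * v p * (star (v q) * v l) -
      (if j = p then star f * f else 0) * (if q = l then star f * f else 0) =
      (star (v j) * v p - if j = p then star f * f else 0) * (star (v q) * v l) +
      (if j = p then star f * f else 0) *
        (star (v q) * v l - if q = l then star f * f else 0) := by
    rw [sub_mul, mul_sub]; abel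
  rw [h2]
  refine (norm_add_le_of_le ((norm_mul_le _ _).trans (mul_le_mul (hv.2 j p) h1 (norm_nonneg _) hε0))
    ((norm_mul_le _ _).trans (mul_le_mul (hd j p) (hv.2 q l) (norm_nonneg _) zero_le_one))).trans ?_
  linarith

/-- Compression by the frame recovers the entries of `t` from `rep t v`, up to the factor `(f^* f)^2`. -/
theorem norm_rep_conj_sub_le {ε T : ℝ} (hε : ε ≤ 1) {f : A} {v : Fin k → A} (hv : Frame ε f v)
    {t : Fin k → Fin k → ℂ} (hT : ∀ j l, ‖t j l‖ ≤ T) (hT0 : 0 ≤ T) (j l : Fin k) :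
    ‖star (v j) * rep t v * v l - t j l • (star f * f * (star f * f))‖ ≤
      k ^ 2 * (T * (3 * ε)) := by
  have h1 : star (v j) * rep t v * v l - t j l • (star f * f * (star f * f)) =
      ∑ p, ∑ q, t p q • (star (v j) * v p * (star (v q) * v l) -
      (if j = p then star f * f else 0) * (if q = l then star f * f else 0)) := by
    simp only [smul_sub, Finset.sum_sub_distrib]
    congr 1
    · simp only [rep, Finset.mul_sum, Finset.sum_mul, smul_mul_assoc, mul_smul_comm, mul_assoc]
    · simp
  rw [h1]
  refine (norm_sum_le_of_le _ fun p _ => norm_sum_le_of_le _ fun q _ => (norm_smul_le _ _).trans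
    (mul_le_mul (hT p q) (norm_frame_mul_sub_le hε hv j p q l) (norm_nonneg _) hT0)).trans ?_
  simp only [Finset.sum_const, Finset.card_univ, Fintype.card_fin, nsmul_eq_mul]
  exact le_of_eq (by ring)

/-- Compressing the second leg by a good frame recovers the matrix `∑ t_i ⊗ a_i`. -/
theorem exists_lower (t : Fin m → Fin k → Fin k → ℂ) {T : ℝ} (hT : ∀ i j l, ‖t i j l‖ ≤ T)
    (hT0 : 0 ≤ T) (a : Fin m → A) {η : ℝ} (hη : 0 < η) :
    ∃ ε : ℝ, 0 < ε ∧ ∀ (f : A) (v : Fin k → A), Frame ε f v →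
      ‖comb t a‖ ≤ (1 + η) * minNorm A A (∑ i, a i ⊗ₜ[ℂ] rep (t i) v) + η := by
  let S : ℝ := ∑ i, ‖a i‖
  have hS : 0 ≤ S := Finset.sum_nonneg fun i _ => norm_nonneg _
  let Q : ℝ := S * (k ^ 2 * (T * 3))
  have hQ : 0 ≤ Q := by positivity
  let ε : ℝ := min 1 (η / ((k ^ 2 + 1) * (Q + 1)))
  have hε : 0 < ε := by positivity
  have hε1 : ε ≤ 1 := min_le_left _ _
  have h1 : ε * ((k ^ 2 + 1) * (Q + 1)) ≤ η := (le_div_iff₀ (by positivity)).1 (min_le_right _ _)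
  have hk : 0 ≤ (k : ℝ) ^ 2 * ε := by positivity
  have hεk : (k : ℝ) ^ 2 * ε ≤ η := by nlinarith [mul_nonneg hk hQ, mul_nonneg hε.le hQ]
  have hεQ : (k : ℝ) ^ 2 * (Q * ε) ≤ η := by nlinarith [mul_nonneg hk hQ, mul_nonneg hε.le hQ]
  refine ⟨ε, hε, fun f v hv => ?_⟩
  have key : (‖comb t a‖ - η) / (1 + η) ≤ minNorm A A (∑ i, a i ⊗ₜ[ℂ] rep (t i) v) := by
    refine le_minNorm fun ν hν => ?_
    obtain ⟨D, iD, ι, κ, hc, h0, hn⟩ := hν.exists_model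
    rw [← hn, div_le_iff₀ (by positivity), sub_le_iff_le_add]
    have hι : ∀ a, ‖ι a‖ ≤ ‖a‖ := NonUnitalStarAlgHom.norm_apply_le (ι : A →⋆ₙₐ[ℂ] D)
    have hκ : ∀ a, ‖κ a‖ ≤ ‖a‖ := NonUnitalStarAlgHom.norm_apply_le (κ : A →⋆ₙₐ[ℂ] D)
    have h2 := norm_le_of_compress (κ : A →⋆ₙₐ[ℂ] D) (ι : A →⋆ₙₐ[ℂ] D) (fun a b => (hc b a).symm)
      (fun a b hab => (h0 b a (by rw [(hc b a).eq]; exact hab)).symm)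
      (∑ i, ι (a i) * κ (rep (t i) v)) (fun j => κ (v j)) (κ (star f * f))
      ((hκ _).trans hv.norm_sq.le) (ε := ε) (η := Q * ε) (fun j l => ?_)
      (star f * f * (star f * f)) ?_ (comb t a) (fun j l => ?_)
    · have h3 : 0 ≤ ‖∑ i, ι (a i) * κ (rep (t i) v)‖ := norm_nonneg _
      nlinarith [mul_le_mul_of_nonneg_right hεk h3]
    · refine le_trans (le_of_eq ?_) ((hκ _).trans (hv.2 j l))
      have h4 : κ (star (v j) * v l) = star (κ (v j)) * κ (v l) := by rw [map_mul, map_star]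
      rw [map_sub, h4]
      split_ifs
      · rfl
      · rw [map_zero]
    · have h3 : star (star f * f) = star f * f := by rw [star_mul, star_star]
      nth_rewrite 1 [← h3]
      rw [CStarRing.norm_star_mul_self, hv.norm_sq, one_mul]
    · have h3 : star (κ (v j)) * (∑ i, ι (a i) * κ (rep (t i) v)) * κ (v l) -
          (κ : A →⋆ₙₐ[ℂ] D) (star f * f * (star f * f)) * (ι : A →⋆ₙₐ[ℂ] D) (comb t a j l) =
          ∑ i, ι (a i) * κ (star (v j) * rep (t i) v * v l -
            t i j l • (star f * f * (star f * f))) := by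
        change star (κ (v j)) * (∑ i, ι (a i) * κ (rep (t i) v)) * κ (v l) -
          κ (star f * f * (star f * f)) * ι (comb t a j l) = _
        rw [← (hc _ _).eq, comb_entry]
        simp only [map_sub, mul_sub, Finset.sum_sub_distrib, map_sum, map_smul, Finset.sum_mul,
          Finset.mul_sum]
        congr 1
        · refine Finset.sum_congr rfl fun i _ => ?_
          rw [← map_star, ← mul_assoc, ← (hc (a i) (star (v j))).eq]
          simp only [map_mul, mul_assoc]
        · refine Finset.sum_congr rfl fun i _ => ?_
          rw [smul_mul_assoc, mul_smul_comm]
      rw [h3]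
      refine (norm_sum_le_of_le _ fun i _ => (norm_mul_le _ _).trans (mul_le_mul (hι (a i))
        ((hκ _).trans (norm_rep_conj_sub_le hε1 hv (hT i) hT0 j l)) (norm_nonneg _)
        (norm_nonneg _))).trans ?_
      rw [← Finset.sum_mul]
      exact le_of_eq (by simp only [Q, S]; ring)
  rw [div_le_iff₀ (by positivity)] at key
  linarith

end Transfer

/-! ### Lifting the norm estimate -/

section Main
variable {A B C : Type} [CStarAlgebra A] [CStarAlgebra B] [CStarAlgebra C] {m : ℕ}

/-- If the frames in `A` have bounded size, then compressions of bounded size compute the minimal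
norm on `A ⊙ B`, and a single element of `ker q` controls all of them. -/
theorem exists_lift_of_not_frame (q : B →⋆ₐ[ℂ] C) (a : Fin m → A) (b : Fin m → B) {k : ℕ}
    (hk : ¬ ∀ ε : ℝ, 0 < ε → ∃ (f : A) (v : Fin k → A), Frame ε f v) {δ : ℝ} (hδ : 0 < δ) :
    ∃ e, q e = 0 ∧ minNorm A B (∑ i, a i ⊗ₜ[ℂ] (b i * (1 - e))) ≤
      minNorm A C (∑ i, a i ⊗ₜ[ℂ] q (b i)) + δ := by
  obtain ⟨e, he, -, h⟩ := exists_good q b (∑ i, ‖a i‖) (minNorm A C (∑ i, a i ⊗ₜ[ℂ] q (b i))) hδ k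
  refine ⟨e, he, minNorm_le (add_nonneg (minNorm_nonneg _) hδ.le) fun φ hφ n c hc => ?_⟩
  have hn : n ≤ k := by
    by_contra! hkn
    exact hk fun ε hε => hφ.exists_frame hc hkn.le hε
  rw [amp_eq_comb]
  refine h n hn _ (fun i j l => (norm_coef_le hφ hc a i j l).trans
    (Finset.single_le_sum (f := fun i => ‖a i‖) (fun i _ => norm_nonneg _) (Finset.mem_univ i))) ?_
  rw [← amp_eq_comb]
  exact norm_amp_le hφ hc _

/-- If the norm estimate cannot be lifted, then for every `d` there are `w_i ∈ A` which look like
the `q (b_i)` to all compressions of size at most `d`, while `∑ a_i ⊗ w_i` has a large minimal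
norm. -/
theorem exists_witness (hA : ∀ k : ℕ, ∀ ε : ℝ, 0 < ε → ∃ (f : A) (v : Fin k → A), Frame ε f v)
    (q : B →⋆ₐ[ℂ] C) (a : Fin m → A) (b : Fin m → B) {δ R r : ℝ} (hδ : 0 < δ) (hR : 1 ≤ R)
    (hr : 0 ≤ r) (hne : ∀ e, q e = 0 →
      r + 3 * δ < minNorm A B (∑ i, a i ⊗ₜ[ℂ] (b i * (1 - e)))) (d : ℕ) :
    ∃ w : Fin m → A, (∀ i, ‖w i‖ ≤ 2 * ‖b i‖ + 1) ∧
      (∀ n ≤ d, ∀ α : Fin m → Fin n → Fin n → ℂ, (∀ i j l, ‖α i j l‖ ≤ R) →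
        ‖comb α fun i => q (b i)‖ ≤ r → ‖comb α w‖ ≤ r + 2 * δ) ∧
      r + 5 / 2 * δ ≤ minNorm A A (∑ i, a i ⊗ₜ[ℂ] w i) := by
  classical
  obtain ⟨e, he, he1, h⟩ := exists_good q b R r hδ d
  let b' : Fin m → B := fun i => b i * (1 - e)
  have hb' : ∀ i, ‖b' i‖ ≤ ‖b i‖ := fun i =>
    (norm_mul_le _ _).trans (mul_le_of_le_one_right (norm_nonneg _) he1)
  have h1 := hne e he
  rw [minNorm_sum_comm] at h1
  obtain ⟨ψ, hψ, k, u, hu, hlow⟩ : ∃ ψ : B →ₗ[ℂ] ℂ, Excisable ψ ∧ ∃ (k : ℕ) (u : Fin k → B),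
      ON ψ u ∧ r + 3 * δ < ‖comb (coef ψ u b') a‖ := by
    by_contra! hcon
    refine absurd (minNorm_le (by positivity) fun ψ hψ k u hu => ?_) h1.not_ge
    rw [amp_eq_comb]
    exact hcon ψ hψ k u hu
  let η : ℝ := δ / (2 * (r + 3 * δ + 1))
  have hη : 0 < η := by positivity
  have hη' : η * (2 * (r + 3 * δ + 1)) = δ := div_mul_cancel₀ _ (by positivity)
  have hη1 : η ≤ 1 := div_le_one_of_le₀ (by linarith) (by positivity)
  have hηr : 0 ≤ η * r := by positivity
  have hηδ : 0 < η * δ := by positivity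
  obtain ⟨ε₁, hε₁, hup⟩ := exists_upper A hψ hu b' (zero_le_one.trans hR) (d + 1) hη
  obtain ⟨ε₂, hε₂, hlo⟩ := exists_lower (coef ψ u b') (T := ∑ i, ‖b' i‖)
    (fun i j l => (norm_coef_le hψ hu b' i j l).trans (Finset.single_le_sum
      (f := fun i => ‖b' i‖) (fun i _ => norm_nonneg _) (Finset.mem_univ i)))
    (Finset.sum_nonneg fun i _ => norm_nonneg _) a hη
  obtain ⟨f, v, hv⟩ := hA k (min ε₁ ε₂) (lt_min hε₁ hε₂)
  replace hup := hup f v (hv.mono (min_le_left _ _))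
  replace hlo := hlo f v (hv.mono (min_le_right _ _))
  refine ⟨fun i => rep (coef ψ u b' i) v, fun i => ?_, fun n hn α hα hαq => ?_, ?_⟩
  · -- the bound for `w i` is the case of a `1 × 1` coefficient matrix
    have hs : ∀ {E : Type} [CStarAlgebra E] (g : Fin m → E),
        comb (n := 1) (fun i' _ _ => if i' = i then 1 else 0) g = Mat.diag 1 E (g i) :=
      fun g => by
        ext j l
        simp [comb_entry, Mat.diag_apply, Subsingleton.elim j l]
    have h2 := hup 1 (by omega) (fun i' _ _ => if i' = i then 1 else 0) fun i' _ _ => by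
      split_ifs
      · simpa using hR
      · simpa using zero_le_one.trans hR
    rw [hs, hs] at h2
    have h3 : ‖Mat.diag 1 A (rep (coef ψ u b' i) v) 0 0‖ ≤
      ‖Mat.diag 1 A (rep (coef ψ u b' i) v)‖ := CStarMatrix.norm_entry_le_norm
    rw [Mat.diag_apply, if_pos rfl] at h3
    have h4 : ‖Mat.diag 1 B (b' i)‖ ≤ ‖b i‖ := (Mat.norm_diag_le _).trans (hb' i)
    have h5 : (1 + η) * ‖Mat.diag 1 B (b' i)‖ ≤ 2 * ‖b i‖ :=
      mul_le_mul (by linarith) h4 (norm_nonneg _) (by norm_num)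
    linarith
  · have h2 := hup n (by omega) α hα
    have h3 := h n hn α hα hαq
    have h4 : (1 + η) * ‖comb α b'‖ ≤ (1 + η) * (r + δ) :=
      mul_le_mul_of_nonneg_left h3 (by positivity)
    nlinarith
  · by_contra! hcon
    have h4 := mul_le_mul_of_nonneg_left hcon.le (by positivity : 0 ≤ 1 + η)
    nlinarith

/-- If `A` has frames of every size and property min-`U`, then the norm estimate lifts: otherwise the
`w_i` of `exists_witness` define elements of `A^U` for which property min-`U` fails. -/
theorem exists_lift_of_frame {U : Ultrafilter ℕ} (hU : ∀ m : ℕ, U ≠ pure m) (hmin : HasMinU U A)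
    (hA : ∀ k : ℕ, ∀ ε : ℝ, 0 < ε → ∃ (f : A) (v : Fin k → A), Frame ε f v)
    (q : B →⋆ₐ[ℂ] C) (a : Fin m → A) (b : Fin m → B) {δ : ℝ} (hδ : 0 < δ) :
    ∃ e, q e = 0 ∧ minNorm A B (∑ i, a i ⊗ₜ[ℂ] (b i * (1 - e))) ≤
      minNorm A C (∑ i, a i ⊗ₜ[ℂ] q (b i)) + 3 * δ := by
  by_contra! hne
  set r := minNorm A C (∑ i, a i ⊗ₜ[ℂ] q (b i)) with hr
  have hr0 : 0 ≤ r := minNorm_nonneg _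
  have hS : 0 ≤ ∑ i, ‖a i‖ := Finset.sum_nonneg fun i _ => norm_nonneg _
  choose w hwb hwu hwl using exists_witness (R := 1 + ∑ i, ‖a i‖) hA q a b hδ (by linarith) hr0 hne
  obtain ⟨E, iE, π, hπ⟩ := exists_ultrapower U A
  have hbw : ∀ i, Bdd (A := fun _ => A) fun d => w d i := fun i => ⟨_, fun d => hwb d i⟩
  have hlim := hmin E π hπ m (fun i _ => a i) (fun i d => w d i) (fun i => bdd_const (a i)) hbw
  have hge := ge_of_tendsto' hlim hwl
  have hle : minNorm E E (∑ i, π (fun _ => a i) ⊗ₜ[ℂ] π (fun d => w d i)) ≤ r + 2 * δ := by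
    refine minNorm_le (by positivity) fun φ hφ n c hc => ?_
    rw [amp_eq_comb]
    let α := coef φ c fun i => hπ.const (a i)
    have hα : ∀ i j l, ‖α i j l‖ ≤ 1 + ∑ i, ‖a i‖ := fun i j l => by
      refine (norm_coef_le hφ hc _ i j l).trans ?_
      refine (NonUnitalStarAlgHom.norm_apply_le (hπ.const : A →⋆ₙₐ[ℂ] E) (a i)).trans ?_
      have := Finset.single_le_sum (f := fun i => ‖a i‖) (fun i _ => norm_nonneg _)
        (Finset.mem_univ i)
      linarith
    have hαq : ‖comb α fun i => q (b i)‖ ≤ r := by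
      rw [← amp_eq_comb]
      exact (norm_amp_le hφ hc _).trans (minNorm_map_left_le hπ.const (fun i => q (b i)) a)
    have hev : ∀ᶠ d in (U : Filter ℕ), n ≤ d := by
      rcases U.le_cofinite_or_eq_pure with h | ⟨d, h⟩
      · rw [Nat.cofinite_eq_atTop] at h
        exact h (eventually_ge_atTop n)
      · exact absurd h (hU d)
    have h1 := hπ.norm_matrix_le (fun d => comb α (w d)) (R := r + 2 * δ) (by positivity)
      ⟨n ^ 2 * ∑ i, (1 + ∑ i, ‖a i‖) * (2 * ‖b i‖ + 1), fun d => Mat.norm_le_of_entry _ fun j l => by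
        rw [comb_entry]
        exact norm_sum_le_of_le _ fun i _ => (norm_smul_le _ _).trans
          (mul_le_mul (hα i j l) (hwb d i) (norm_nonneg _) (by linarith))⟩
      (hev.mono fun d hd => hwu d n hd α hα hαq)
    refine le_trans (le_of_eq ?_) h1
    congr 1
    ext j l
    have h2 := (hπ.map_sum Finset.univ (fun i => α i j l • fun d => w d i)
      fun i => (hbw i).smul' _).2
    have h3 : (fun d => comb α (w d) j l) = ∑ i, (α i j l • fun d => w d i) := by
      funext d
      rw [comb_entry, Finset.sum_apply]
      rfl
    rw [Mat.of_entry, h3, h2, comb_entry]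
    exact Finset.sum_congr rfl fun i _ => (hπ.map_smul _ _ (hbw i)).symm
  linarith

end Main

end Aux

/-- If a C*-algebra `A` has property min-`U` for some nonprincipal
ultrafilter `U` on `ℕ`, then `A` is exact. -/
theorem isExact_of_hasMinU (A : Type) [CStarAlgebra A] (U : Ultrafilter ℕ)
    (hU : ∀ m : ℕ, U ≠ pure m) (h : HasMinU U A) : IsExact A := by
  intro B C _ _ q _ x
  have hlift : ∀ (m : ℕ) (a : Fin m → A) (b : Fin m → B) (δ : ℝ), 0 < δ →
      ∃ e, q e = 0 ∧ minNorm A B (∑ i, a i ⊗ₜ[ℂ] (b i * (1 - e))) ≤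
        minNorm A C (∑ i, a i ⊗ₜ[ℂ] q (b i)) + 3 * δ := fun m a b δ hδ => by
    by_cases hA : ∀ k : ℕ, ∀ ε : ℝ, 0 < ε → ∃ (f : A) (v : Fin k → A), Frame ε f v
    · exact exists_lift_of_frame hU h hA q a b hδ
    · obtain ⟨k, hk⟩ := not_forall.1 hA
      obtain ⟨e, he, h1⟩ := exists_lift_of_not_frame q a b hk hδ
      exact ⟨e, he, h1.trans (by linarith)⟩
  have hmap : ∀ (m : ℕ) (a : Fin m → A) (b : Fin m → B),
      Algebra.TensorProduct.map (AlgHom.id ℂ A) q.toAlgHom (∑ i, a i ⊗ₜ[ℂ] b i) =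
        ∑ i, a i ⊗ₜ[ℂ] q (b i) := fun m a b => by
    rw [map_sum]
    exact Finset.sum_congr rfl fun i _ => by simp
  refine le_antisymm (le_csInf ⟨_, 0, Submodule.zero_mem _, rfl⟩ ?_) ?_
  · rintro _ ⟨y, hy, rfl⟩
    have h0 : Algebra.TensorProduct.map (AlgHom.id ℂ A) q.toAlgHom y = 0 := by
      induction hy using Submodule.span_induction with
      | mem t ht =>
        obtain ⟨a, b, hb, rfl⟩ := ht
        simp [hb]
      | zero => simp
      | add y z _ _ hy hz => rw [map_add, hy, hz, add_zero]
      | smul c y _ hy => rw [map_smul, hy, smul_zero]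
    obtain ⟨m, a, b, hab⟩ := exists_sum_tmul (x - y)
    have h1 := minNorm_map_right_le q a b
    rw [← hmap, ← hab, map_sub, h0, sub_zero] at h1
    exact h1
  · obtain ⟨m, a, b, rfl⟩ := exists_sum_tmul x
    rw [hmap]
    refine le_of_forall_pos_le_add fun δ hδ => ?_
    obtain ⟨e, he, h1⟩ := hlift m a b (δ / 3) (by positivity)
    rw [mul_div_cancel₀ _ (three_ne_zero' ℝ)] at h1
    refine le_trans (csInf_le ⟨0, ?_⟩ ⟨∑ i, a i ⊗ₜ[ℂ] (b i * e), ?_, rfl⟩) (le_trans (le_of_eq ?_) h1)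
    · rintro _ ⟨y, -, rfl⟩
      exact minNorm_nonneg _
    · exact Submodule.sum_mem _ fun i _ =>
        Submodule.subset_span ⟨a i, b i * e, by rw [map_mul, he, mul_zero], rfl⟩
    · rw [← Finset.sum_sub_distrib]
      congr 1
      refine Finset.sum_congr rfl fun i _ => ?_
      rw [← TensorProduct.tmul_sub, mul_sub, mul_one]

end
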